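/- arXiv:math/0405393 — 2 statements merged into one kernel-verified Lean document; each statement's English description precedes it below -/
import Mathlib

section
/- The d-Skeleton Conjecture holds in the following cases: (a) for d = 1 and every q ≥ 1, every continuous map f : Δ_1^{2(q-1)} → ℝ admits a Tverberg partition {S_1, …, S_q} with |S_i| ≤ 2 for all i; (b) if q is a prime power, then for every d ≥ 1, every continuous map f : Δ_d^{(d+1)(q-1)} → ℝ^d admits a Tverberg partition {S_1, …, S_q} with |S_i| ≤ d+1 for all i. -/
open scoped BigOperators

noncomputable section

/-- Euclidean space `ℝ^d`. -/
abbrev Euc (d : ℕ) : Type := EuclideanSpace ℝ (Fin d)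

/-- The standard `N`-simplex `Δ^N ⊆ ℝ^{N+1}`. -/
def stdSimp (N : ℕ) : Set (Fin (N+1) → ℝ) :=
  {x | (∀ i, 0 ≤ x i) ∧ ∑ i, x i = 1}

/-- The face `σ_S` of `Δ^N` spanned by the vertices in `S`. -/
def simpFace {N : ℕ} (S : Finset (Fin (N+1))) : Set (Fin (N+1) → ℝ) :=
  {x ∈ stdSimp N | ∀ i ∉ S, x i = 0}

/-- The `k`-skeleton `Δ_k^N` of the standard `N`-simplex. -/
def skel (N k : ℕ) : Set (Fin (N+1) → ℝ) :=
  {x ∈ stdSimp N | {i | x i ≠ 0}.ncard ≤ k + 1}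

/-- A Tverberg partition for (the relevant restriction of) `f`: a set of `q`
pairwise disjoint nonempty vertex subsets whose faces have images with a common point. -/
def IsTverbergPartition (q : ℕ) {N d : ℕ}
    (f : (Fin (N+1) → ℝ) → Euc d) (P : Finset (Finset (Fin (N+1)))) : Prop :=
  P.card = q ∧ (∀ S ∈ P, S.Nonempty) ∧
  (∀ S ∈ P, ∀ T ∈ P, S ≠ T → Disjoint S T) ∧
  (⋂ S ∈ P, f '' simpFace S).Nonempty

namespace ListChain

variable {S : Type*}

/-- Integral chains on lists of points; the empty list spans the augmentation degree. -/
abbrev Chain (S : Type*) : Type _ := List S →₀ ℤ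

/-- The cone operator with apex `s`. -/
def cons (s : S) : Chain S →ₗ[ℤ] Chain S := Finsupp.lmapDomain ℤ ℤ (List.cons s)

@[simp] lemma cons_single (s : S) (l : List S) (a : ℤ) :
    cons s (Finsupp.single l a) = Finsupp.single (s :: l) a := by
  simp [cons]

/-- The boundary of a list. -/
def bdryList : List S → Chain S
  | [] => 0
  | a :: l => Finsupp.single l 1 - cons a (bdryList l)

/-- The augmented simplicial boundary. -/
def bdry : Chain S →ₗ[ℤ] Chain S := Finsupp.linearCombination ℤ bdryList

@[simp] lemma bdry_single_nil (a : ℤ) : bdry (Finsupp.single ([] : List S) a) = 0 := by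
  simp [bdry, bdryList]

lemma bdry_single (l : List S) : bdry (Finsupp.single l 1) = bdryList l := by
  simp [bdry]

lemma bdry_cons (s : S) (c : Chain S) : bdry (cons s c) = c - cons s (bdry c) := by
  have : bdry ∘ₗ cons s = LinearMap.id - cons s ∘ₗ bdry := by
    ext l : 2
    simp [bdry_single, bdryList]
  exact LinearMap.congr_fun this c

lemma bdry_single_cons (s : S) (l : List S) :
    bdry (Finsupp.single (s :: l) 1) =
      Finsupp.single l 1 - cons s (bdry (Finsupp.single l 1)) := by
  rw [← cons_single, bdry_cons]

lemma bdry_bdry (c : Chain S) : bdry (bdry c) = 0 := by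
  have : (bdry ∘ₗ bdry : Chain S →ₗ[ℤ] Chain S) = 0 := by
    ext l : 2
    simp only [LinearMap.comp_apply, Finsupp.lsingle_apply, LinearMap.zero_apply]
    induction l with
    | nil => simp
    | cons a l ih => simp [bdry_single_cons, bdry_cons, ih]
  exact LinearMap.congr_fun this c

/-- The map of chains induced by a map of points. -/
def act {S' : Type*} (f : S → S') : Chain S →ₗ[ℤ] Chain S' := Finsupp.lmapDomain ℤ ℤ (List.map f)

@[simp] lemma act_single {S' : Type*} (f : S → S') (l : List S) (a : ℤ) :
    act f (Finsupp.single l a) = Finsupp.single (l.map f) a := by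
  simp [act]

lemma act_cons {S' : Type*} (f : S → S') (s : S) (c : Chain S) :
    act f (cons s c) = cons (f s) (act f c) := by
  have : act f ∘ₗ cons s = cons (f s) ∘ₗ act f := by
    ext l : 2
    simp
  exact LinearMap.congr_fun this c

lemma act_bdry {S' : Type*} (f : S → S') (c : Chain S) : act f (bdry c) = bdry (act f c) := by
  have : act f ∘ₗ bdry = bdry ∘ₗ act f := by
    ext l : 2
    simp only [LinearMap.comp_apply, Finsupp.lsingle_apply]
    induction l with
    | nil => simp
    | cons a l ih => simp [bdry_single_cons, act_cons, ih]
  exact LinearMap.congr_fun this c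

/-- Chains supported on lists satisfying a predicate. -/
def On (P : List S → Prop) : Submodule ℤ (Chain S) := Finsupp.supported ℤ ℤ {l | P l}

lemma mem_on {P : List S → Prop} {c : Chain S} : c ∈ On P ↔ ∀ l, c l ≠ 0 → P l := by
  simp only [On, Finsupp.mem_supported, Set.subset_def, Finset.mem_coe, Finsupp.mem_support_iff]
  rfl

lemma single_mem_on {P : List S → Prop} {l : List S} (h : P l) (a : ℤ) :
    Finsupp.single l a ∈ On P :=
  Finsupp.single_mem_supported ℤ a h

lemma on_induction {P : List S → Prop} {N : Submodule ℤ (Chain S)}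
    (h : ∀ l, P l → Finsupp.single l 1 ∈ N) : On P ≤ N := by
  unfold On
  rw [Finsupp.supported_eq_span_single, Submodule.span_le]
  rintro _ ⟨l, hl, rfl⟩
  exact h l hl

lemma on_mono {P Q : List S → Prop} (h : ∀ l, P l → Q l) : On P ≤ On Q :=
  on_induction fun l hl => single_mem_on (h l hl) 1

lemma map_mem_on {S' : Type*} {P : List S → Prop} {Q : List S' → Prop} (φ : Chain S →ₗ[ℤ] Chain S')
    (h : ∀ l, P l → φ (Finsupp.single l 1) ∈ On Q) {c : Chain S} (hc : c ∈ On P) : φ c ∈ On Q :=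
  (on_induction (N := (On Q).comap φ) (fun l hl => h l hl)) hc

lemma eq_on {M : Type*} [AddCommGroup M] {P : List S → Prop} {φ ψ : Chain S →ₗ[ℤ] M}
    (h : ∀ l, P l → φ (Finsupp.single l 1) = ψ (Finsupp.single l 1)) {c : Chain S}
    (hc : c ∈ On P) : φ c = ψ c :=
  (on_induction (N := LinearMap.eqLocus φ ψ) (fun l hl => h l hl)) hc

lemma cons_mem_on {P Q : List S → Prop} {s : S} (h : ∀ l, P l → Q (s :: l)) {c : Chain S}
    (hc : c ∈ On P) : cons s c ∈ On Q :=
  map_mem_on _ (fun l hl => by simpa using single_mem_on (h l hl) 1) hc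

lemma act_mem_on {S' : Type*} {P : List S → Prop} {Q : List S' → Prop} {f : S → S'}
    (h : ∀ l, P l → Q (l.map f)) {c : Chain S} (hc : c ∈ On P) : act f c ∈ On Q :=
  map_mem_on _ (fun l hl => by simpa using single_mem_on (h l hl) 1) hc

lemma bdry_mem_on_sublist (l : List S) :
    bdry (Finsupp.single l 1) ∈ On fun l' => l'.Sublist l ∧ l'.length + 1 = l.length := by
  induction l with
  | nil => simp
  | cons a l ih =>
    rw [bdry_single_cons]
    refine Submodule.sub_mem _ (single_mem_on ⟨List.sublist_cons_self _ _, by simp⟩ 1) ?_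
    refine cons_mem_on ?_ ih
    rintro l' ⟨h1, h2⟩
    exact ⟨h1.cons_cons a, by simp [h2]⟩

end ListChain

section Family

variable {M : Type*} [AddCommGroup M] {r : ℕ}

/-- The two alternating operators of the periodic resolution of a cyclic group of order `p`:
the norm in even degrees and `t - 1` in odd degrees. -/
def altNorm (p : ℕ) (t : Module.End ℤ M) (n : ℤ) : Module.End ℤ M :=
  if Even n then ∑ k ∈ Finset.range p, t ^ k else t - 1

lemma altNorm_congr (p : ℕ) (t : Module.End ℤ M) {n n' : ℤ} (h : Even n ↔ Even n') :
    altNorm p t n = altNorm p t n' := by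
  simp [altNorm, h]

lemma altNorm_mul_pred {p : ℕ} {t : Module.End ℤ M} (ht : t ^ p = 1) (n : ℤ) :
    altNorm p t n * altNorm p t (n - 1) = 0 := by
  by_cases h : Even n
  · have h' : ¬ Even (n - 1) := by simp [h]
    simp only [altNorm, h, h', if_true, if_false]
    rw [geom_sum_mul, ht, sub_self]
  · have h' : Even (n - 1) := by simpa [Int.even_sub] using h
    simp only [altNorm, h, h', if_true, if_false]
    rw [mul_geom_sum, ht, sub_self]

lemma Commute.altNorm_altNorm (p : ℕ) {t s : Module.End ℤ M} (h : Commute t s) (n k : ℤ) :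
    Commute (altNorm p t n) (altNorm p s k) := by
  have key : ∀ {t s : Module.End ℤ M} (_ : Commute t s) (n : ℤ), Commute (altNorm p t n) s := by
    intro t s h n
    unfold altNorm
    split_ifs
    · exact Commute.sum_left _ _ _ fun i _ => h.pow_left i
    · exact h.sub_left (Commute.one_left s)
  exact (key (key h n).symm k).symm

/-- The total differential of a family indexed by multidegrees: the transpose of the differential
of a tensor product of `r` periodic resolutions. -/
def famD (p : ℕ) (t : Fin r → Module.End ℤ M) (z : (Fin r → ℤ) → M) (m : Fin r → ℤ) : M :=
  ∑ i, ((∑ l ∈ Finset.Iio i, m l).negOnePow : ℤ) • altNorm p (t i) (m i) (z (m - Pi.single i 1))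

lemma famD_add (p : ℕ) (t : Fin r → Module.End ℤ M) (z z' : (Fin r → ℤ) → M) (m : Fin r → ℤ) :
    famD p t (z + z') m = famD p t z m + famD p t z' m := by
  simp [famD, Finset.sum_add_distrib]

lemma famD_sub (p : ℕ) (t : Fin r → Module.End ℤ M) (z z' : (Fin r → ℤ) → M) (m : Fin r → ℤ) :
    famD p t (z - z') m = famD p t z m - famD p t z' m := by
  simp [famD, smul_sub, Finset.sum_sub_distrib]

lemma famD_smul (p : ℕ) (t : Fin r → Module.End ℤ M) (a : ℤ) (z : (Fin r → ℤ) → M)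
    (m : Fin r → ℤ) : famD p t (a • z) m = a • famD p t z m := by
  simp only [famD, Pi.smul_apply, map_smul, Finset.smul_sum]
  exact Finset.sum_congr rfl fun i _ => smul_comm _ _ _

lemma famD_sum {ι : Type*} (s : Finset ι) (p : ℕ) (t : Fin r → Module.End ℤ M)
    (z : ι → (Fin r → ℤ) → M) (m : Fin r → ℤ) :
    famD p t (∑ i ∈ s, z i) m = ∑ i ∈ s, famD p t (z i) m := by
  simp only [famD, Finset.sum_apply, map_sum, Finset.smul_sum]
  exact Finset.sum_comm

lemma famD_congr (p : ℕ) (t : Fin r → Module.End ℤ M) {z z' : (Fin r → ℤ) → M} {m : Fin r → ℤ}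
    (h : ∀ m', ∑ i, m' i = ∑ i, m i - 1 → z m' = z' m') : famD p t z m = famD p t z' m := by
  refine Finset.sum_congr rfl fun i _ => ?_
  rw [h]
  simp [Finset.sum_sub_distrib]

lemma famD_mem (p : ℕ) {t : Fin r → Module.End ℤ M} {N : Submodule ℤ M}
    (ht : ∀ i, ∀ x ∈ N, t i x ∈ N) {z : (Fin r → ℤ) → M} {m : Fin r → ℤ}
    (h : ∀ i, z (m - Pi.single i 1) ∈ N) : famD p t z m ∈ N := by
  refine Submodule.sum_mem _ fun i _ => Submodule.smul_mem _ _ ?_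
  have hpow : ∀ k, (t i ^ k) (z (m - Pi.single i 1)) ∈ N := by
    intro k
    induction k with
    | zero => exact h i
    | succ k ih => rw [pow_succ']; exact ht i _ ih
  unfold altNorm
  split_ifs
  · rw [LinearMap.sum_apply]
    exact Submodule.sum_mem _ fun k _ => hpow k
  · rw [LinearMap.sub_apply]
    exact Submodule.sub_mem _ (ht i _ (h i)) (h i)

lemma map_altNorm {M' : Type*} [AddCommGroup M'] (p : ℕ) {t : Module.End ℤ M}
    {t' : Module.End ℤ M'} {φ : M →ₗ[ℤ] M'} (h : ∀ x, φ (t x) = t' (φ x)) (n : ℤ) (x : M) :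
    φ (altNorm p t n x) = altNorm p t' n (φ x) := by
  have hpow : ∀ k : ℕ, φ ((t ^ k) x) = (t' ^ k) (φ x) := by
    intro k
    induction k with
    | zero => rfl
    | succ k ih => rw [pow_succ', pow_succ', Module.End.mul_apply, h, ih, Module.End.mul_apply]
  unfold altNorm
  split_ifs
  · simp [LinearMap.sum_apply, hpow]
  · simp [h]

lemma map_famD {M' : Type*} [AddCommGroup M'] (p : ℕ) {t : Fin r → Module.End ℤ M}
    {t' : Fin r → Module.End ℤ M'} {φ : M →ₗ[ℤ] M'} (h : ∀ i x, φ (t i x) = t' i (φ x))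
    (z : (Fin r → ℤ) → M) (m : Fin r → ℤ) :
    φ (famD p t z m) = famD p t' (fun m' => φ (z m')) m := by
  simp only [famD, map_sum, map_smul, map_altNorm p (h _)]

lemma famD_famD {p : ℕ} {t : Fin r → Module.End ℤ M} (ht : ∀ i, t i ^ p = 1)
    (hc : ∀ i j, Commute (t i) (t j)) (z : (Fin r → ℤ) → M) (m : Fin r → ℤ) :
    famD p t (famD p t z) m = 0 := by
  simp only [famD, map_sum, map_smul, Finset.smul_sum]
  rw [← Finset.sum_product']
  have anti : ∀ i k : Fin r, i < k →
      ((∑ l ∈ Finset.Iio i, m l).negOnePow : ℤ) •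
        ((∑ l ∈ Finset.Iio k, (m - Pi.single i 1 : Fin r → ℤ) l).negOnePow : ℤ) •
          altNorm p (t i) (m i) (altNorm p (t k) ((m - Pi.single i 1 : Fin r → ℤ) k)
            (z (m - Pi.single i 1 - Pi.single k 1))) +
      ((∑ l ∈ Finset.Iio k, m l).negOnePow : ℤ) •
        ((∑ l ∈ Finset.Iio i, (m - Pi.single k 1 : Fin r → ℤ) l).negOnePow : ℤ) •
          altNorm p (t k) (m k) (altNorm p (t i) ((m - Pi.single k 1 : Fin r → ℤ) i)
            (z (m - Pi.single k 1 - Pi.single i 1))) = 0 := by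
    intro i k hik
    have h1 : ∑ l ∈ Finset.Iio k, (m - Pi.single i 1 : Fin r → ℤ) l = ∑ l ∈ Finset.Iio k, m l - 1 := by
      simp [Finset.sum_sub_distrib, Pi.single_apply, hik]
    have h2 : ∑ l ∈ Finset.Iio i, (m - Pi.single k 1 : Fin r → ℤ) l = ∑ l ∈ Finset.Iio i, m l := by
      simp [Finset.sum_sub_distrib, Pi.single_apply, hik.le]
    have h3 : (m - Pi.single i 1 : Fin r → ℤ) k = m k := by simp [hik.ne']
    have h4 : (m - Pi.single k 1 : Fin r → ℤ) i = m i := by simp [hik.ne]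
    rw [h1, h2, h3, h4, sub_right_comm m (Pi.single k 1)]
    have hcomm := LinearMap.congr_fun ((hc i k).altNorm_altNorm p (m i) (m k)).eq
      (z (m - Pi.single i 1 - Pi.single k 1))
    simp only [Module.End.mul_apply] at hcomm
    rw [hcomm, Int.negOnePow_sub, smul_smul, smul_smul, ← add_smul]
    simp [mul_comm]
  refine Finset.sum_involution (fun x _ => (x.2, x.1)) ?_ ?_ ?_ ?_
  · rintro ⟨i, k⟩ -
    rcases lt_trichotomy i k with h | h | h
    · exact anti i k h
    · subst h
      have := LinearMap.congr_fun (altNorm_mul_pred (ht i) (m i))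
        (z (m - Pi.single i 1 - Pi.single i 1))
      simp only [Module.End.mul_apply, LinearMap.zero_apply] at this
      simp [this]
    · rw [add_comm]
      exact anti k i h
  · rintro ⟨i, k⟩ - hne heq
    simp only [Prod.mk.injEq] at heq
    obtain ⟨rfl, -⟩ := heq
    apply hne
    have := LinearMap.congr_fun (altNorm_mul_pred (ht k) (m k))
      (z (m - Pi.single k 1 - Pi.single k 1))
    simp only [Module.End.mul_apply, LinearMap.zero_apply] at this
    simp [this]
  · simp
  · simp

end Family

namespace ListChain

variable {S : Type*} {r : ℕ}

@[simp] lemma cons_apply_nil (s : S) (c : Chain S) : cons s c [] = 0 := by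
  rw [cons, Finsupp.lmapDomain_apply, Finsupp.mapDomain_of_notMem_range]
  simp

lemma act_pow (f : S → S) (k : ℕ) (c : Chain S) :
    ((act f : Module.End ℤ (Chain S)) ^ k) c = act f^[k] c := by
  induction k generalizing c with
  | zero =>
    have : (act (id : S → S)) = LinearMap.id := by ext l : 2; simp
    simp [this]
  | succ k ih =>
    rw [pow_succ, Module.End.mul_apply, ih]
    have : act f^[k + 1] = act f^[k] ∘ₗ (act f : Chain S →ₗ[ℤ] Chain S) := by
      ext l : 2
      simp [Function.iterate_succ]
    rw [this]
    rfl

/-- The operators on chains induced by commuting self-maps of the point set. -/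
abbrev ops (σ : Fin r → S → S) : Fin r → Module.End ℤ (Chain S) := fun i => act (σ i)

/-- Commuting self-maps of exponent `p`: an action of `(ℤ/p)^r` on `S`. -/
structure IsTorusAction (p : ℕ) (σ : Fin r → S → S) : Prop where
  comm : ∀ i j x, σ i (σ j x) = σ j (σ i x)
  iterate : ∀ i x, (σ i)^[p] x = x

lemma IsTorusAction.ops_pow {p : ℕ} {σ : Fin r → S → S} (h : IsTorusAction p σ) (i : Fin r) :
    ops σ i ^ p = 1 := by
  ext1 c
  ext1
  rw [LinearMap.comp_apply, LinearMap.comp_apply, act_pow]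
  have : (σ i)^[p] = id := funext (h.iterate i)
  simp [this]

lemma IsTorusAction.ops_comm {p : ℕ} {σ : Fin r → S → S} (h : IsTorusAction p σ) (i j : Fin r) :
    Commute (ops σ i) (ops σ j) := by
  refine LinearMap.ext fun c => ?_
  have : act (σ i) ∘ₗ act (σ j) = act (σ j) ∘ₗ (act (σ i) : Chain S →ₗ[ℤ] Chain S) := by
    ext l : 2
    simp [Function.comp_def, h.comm i j]
  exact LinearMap.congr_fun this c

lemma bdry_famD (p : ℕ) (σ : Fin r → S → S) (z : (Fin r → ℤ) → Chain S) (m : Fin r → ℤ) :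
    bdry (famD p (ops σ) z m) = famD p (ops σ) (fun m' => bdry (z m')) m :=
  map_famD p (fun i x => (act_bdry (σ i) x).symm) z m

/-- Up to multiples of `p`, a family with null augmentation is null-homotopic. -/
lemma exists_homotopy {p : ℕ} {σ : Fin r → S → S} (hσ : IsTorusAction p σ) (s₀ : S)
    {z : (Fin r → ℤ) → Chain S} {c : (Fin r → ℤ) → ℤ} (hneg : ∀ m, ∑ i, m i < 0 → z m = 0) (n : ℕ)
    (hz : ∀ m, ∑ i, m i < (n : ℤ) → bdry (z m) = famD p (ops σ) z m + (p * c m) • Finsupp.single [] 1) :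
    ∃ h y : (Fin r → ℤ) → Chain S, ∀ m, ∑ i, m i < (n : ℤ) →
      z m = bdry (h m) + famD p (ops σ) h m + (p : ℤ) • y m := by
  induction n with
  | zero =>
    refine ⟨0, 0, fun m hm => ?_⟩
    rw [hneg m (by simpa using hm)]
    simp [famD]
  | succ n ih =>
    obtain ⟨h, y, hy⟩ := ih fun m hm => hz m (by push_cast; omega)
    refine ⟨fun m => if ∑ i, m i < (n : ℤ) then h m else cons s₀ (z m - famD p (ops σ) h m),
      fun m => if ∑ i, m i < (n : ℤ) then y m else
        cons s₀ (c m • Finsupp.single [] 1 + famD p (ops σ) y m), fun m hm => ?_⟩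
    have hD : famD p (ops σ)
        (fun m => if ∑ i, m i < (n : ℤ) then h m else cons s₀ (z m - famD p (ops σ) h m)) m =
          famD p (ops σ) h m := by
      refine famD_congr _ _ fun m' hm' => ?_
      rw [if_pos]
      push_cast at hm
      omega
    rw [hD]
    by_cases hlt : ∑ i, m i < (n : ℤ)
    · simp only [hlt, if_true]
      exact hy m hlt
    simp only [hlt, if_false]
    have hzh : famD p (ops σ) (fun m' => bdry (h m')) m =
        famD p (ops σ) z m - (p : ℤ) • famD p (ops σ) y m := by
      have : famD p (ops σ) (fun m' => bdry (h m')) m =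
          famD p (ops σ) (z - famD p (ops σ) h - (p : ℤ) • y) m := by
        refine famD_congr _ _ fun m' hm' => ?_
        have := hy m' (by push_cast at hm; omega)
        simp only [Pi.sub_apply, Pi.smul_apply]
        rw [this]
        abel
      rw [this, famD_sub, famD_sub, famD_smul, famD_famD hσ.ops_pow hσ.ops_comm, sub_zero]
    rw [bdry_cons, map_sub, hz m hm, bdry_famD, hzh]
    have : famD p (ops σ) z m + ((p : ℤ) * c m) • Finsupp.single [] 1 -
        (famD p (ops σ) z m - (p : ℤ) • famD p (ops σ) y m) =
        (p : ℤ) • (c m • Finsupp.single [] 1 + famD p (ops σ) y m) := by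
      rw [smul_add, smul_smul]
      abel
    rw [this, map_smul]
    abel

lemma altNorm_invariant {M : Type*} [AddCommGroup M] {p : ℕ} {t : Module.End ℤ M}
    {α : M →ₗ[ℤ] ZMod p} (hα : ∀ x, α (t x) = α x) (n : ℤ) (x : M) :
    α (altNorm p t n x) = 0 := by
  have hpow : ∀ k : ℕ, α ((t ^ k) x) = α x := by
    intro k
    induction k with
    | zero => rfl
    | succ k ih => rw [pow_succ', Module.End.mul_apply, hα, ih]
  unfold altNorm
  split_ifs
  · simp [LinearMap.sum_apply, hpow]
  · simp [hα]

/-- An invariant cocycle mod `p` vanishes on a family with null augmentation. -/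
lemma cocycle_eq_zero {p : ℕ} {σ : Fin r → S → S} (hσ : IsTorusAction p σ) (s₀ : S)
    {z : (Fin r → ℤ) → Chain S} {c : (Fin r → ℤ) → ℤ} (hneg : ∀ m, ∑ i, m i < 0 → z m = 0) (n : ℕ)
    (hz : ∀ m, ∑ i, m i < (n : ℤ) → bdry (z m) = famD p (ops σ) z m + (p * c m) • Finsupp.single [] 1)
    {α : Chain S →ₗ[ℤ] ZMod p} (hαb : ∀ x, α (bdry x) = 0)
    (hασ : ∀ i x, α (act (σ i) x) = α x) (m : Fin r → ℤ) (hm : ∑ i, m i < (n : ℤ)) : α (z m) = 0 := by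
  obtain ⟨h, y, hy⟩ := exists_homotopy hσ s₀ hneg n hz
  rw [hy m hm, map_add, map_add, hαb, famD, map_sum]
  simp [altNorm_invariant (hασ _)]

/-- A chain model, truncated in degrees below `n`, of the tensor product of `r` periodic
resolutions. -/
structure IsSystem (p : ℕ) (σ : Fin r → S → S) (n : ℕ) (z : (Fin r → ℤ) → Chain S) : Prop where
  mem : ∀ m, z m ∈ On fun l => (∀ i, 0 ≤ m i) ∧ (l.length : ℤ) = ∑ i, m i + 1
  bdry_eq : ∀ m, ∑ i, m i < (n : ℤ) →
    bdry (z m) = famD p (ops σ) z m + if m = 0 then Finsupp.single [] 1 else 0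

lemma IsSystem.eq_zero {p : ℕ} {σ : Fin r → S → S} {n : ℕ} {z : (Fin r → ℤ) → Chain S}
    (hz : IsSystem p σ n z) {m : Fin r → ℤ} {i : Fin r} (hm : m i < 0) : z m = 0 := by
  ext l
  by_contra h
  exact absurd ((mem_on.1 (hz.mem m) l h).1 i) (not_le.2 hm)

lemma IsSystem.eq_zero_of_sum_neg {p : ℕ} {σ : Fin r → S → S} {n : ℕ} {z : (Fin r → ℤ) → Chain S}
    (hz : IsSystem p σ n z) {m : Fin r → ℤ} (hm : ∑ i, m i < 0) : z m = 0 := by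
  obtain ⟨i, -, hi⟩ := Finset.exists_lt_of_sum_lt (s := Finset.univ) (f := m) (g := 0) (by simpa)
  exact hz.eq_zero hi

/-- The augmentation of zero-dimensional chains. -/
def aug : Chain S →ₗ[ℤ] ℤ := Finsupp.lapply [] ∘ₗ bdry

lemma aug_single_nil (a : ℤ) : aug (Finsupp.single ([] : List S) a) = 0 := by simp [aug]

lemma aug_single_cons (s : S) (l : List S) :
    aug (Finsupp.single (s :: l) 1) = if l = [] then 1 else 0 := by
  simp [aug, bdry_single_cons, Finsupp.single_apply]

lemma aug_bdry (c : Chain S) : aug (bdry c) = 0 := by simp [aug, bdry_bdry]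

lemma aug_act (f : S → S) (c : Chain S) : aug (act f c) = aug c := by
  have : aug ∘ₗ act f = (aug : Chain S →ₗ[ℤ] ℤ) := by
    ext l : 2
    cases l <;> simp [aug_single_nil, aug_single_cons]
  exact LinearMap.congr_fun this c

/-- Cap product of a list with a two-dimensional cochain. -/
def capList (u : S → S → S → ℤ) : List S → Chain S
  | x :: y :: w :: l => Finsupp.single (w :: l) (u x y w)
  | _ => 0

/-- Cap product with a two-dimensional cochain. -/
def cap (u : S → S → S → ℤ) : Chain S →ₗ[ℤ] Chain S := Finsupp.linearCombination ℤ (capList u)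

lemma cap_single (u : S → S → S → ℤ) (l : List S) : cap u (Finsupp.single l 1) = capList u l := by
  simp [cap]

lemma cap_cons_cons_cons (u : S → S → S → ℤ) (x y w : S) (c : Chain S) :
    cap u (cons x (cons y (cons w c))) = u x y w • cons w c := by
  have : cap u ∘ₗ cons x ∘ₗ cons y ∘ₗ cons w = u x y w • cons w := by
    ext l : 2
    simp [cap_single, capList]
  exact LinearMap.congr_fun this c

lemma cap_bdry {u : S → S → S → ℤ}
    (hu : ∀ a b c d, u b c d - u a c d + u a b d - u a b c = 0) (c : Chain S) :
    cap u (bdry c) = bdry (cap u c) - aug (cap u c) • Finsupp.single [] 1 := by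
  have : cap u ∘ₗ bdry =
      bdry ∘ₗ cap u - (LinearMap.toSpanSingleton ℤ (Chain S) (Finsupp.single [] 1)) ∘ₗ aug ∘ₗ
        cap u := by
    ext l : 2
    match l with
    | [] => simp [cap_single, capList]
    | [x] => simp [bdry_single_cons, cap_single, capList]
    | [x, y] => simp [bdry_single_cons, cap_single, capList]
    | [x, y, w] =>
      have hs : Finsupp.single [w] (u x y w) = u x y w • Finsupp.single [w] (1 : ℤ) := by simp
      simp only [LinearMap.comp_apply, LinearMap.sub_apply, Finsupp.lsingle_apply, cap_single,
        capList, hs, map_smul, aug_single_cons]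
      simp [bdry_single_cons, cap_single, capList]
    | x :: y :: w :: v :: l =>
      have hs : Finsupp.single (w :: v :: l) (u x y w) =
        u x y w • Finsupp.single (w :: v :: l) (1 : ℤ) := by simp
      simp only [LinearMap.comp_apply, LinearMap.sub_apply, Finsupp.lsingle_apply, cap_single,
        capList, hs, map_smul, aug_single_cons]
      simp only [bdry_single_cons, map_sub, cons_single, cap_single, capList,
        cap_cons_cons_cons, reduceCtorEq, if_false, smul_zero, map_zero, sub_zero]
      have e := hu x y w v
      have e' : u x y w = u y w v - u x w v + u x y v := by linarith
      have h1 : ∀ a : ℤ, Finsupp.single (v :: l) a = a • Finsupp.single (v :: l) (1 : ℤ) := by simp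
      rw [h1 (u y w v), h1 (u x w v), h1 (u x y v)]
      have h2 : Finsupp.single (w :: l) (u x y w) = u x y w • Finsupp.single (w :: l) (1 : ℤ) := by
        simp
      rw [h2, smul_sub, smul_sub]
      nth_rewrite 3 [e']
      rw [add_smul, sub_smul]
      abel
  have := LinearMap.congr_fun this c
  simpa using this

lemma cap_act {u : S → S → S → ℤ} {f : S → S} (hu : ∀ x y w, u (f x) (f y) (f w) = u x y w)
    (c : Chain S) : cap u (act f c) = act f (cap u c) := by
  have : cap u ∘ₗ act f = act f ∘ₗ cap u := by
    ext l : 2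
    match l with
    | [] => simp [cap_single, capList]
    | [x] => simp [cap_single, capList]
    | [x, y] => simp [cap_single, capList]
    | x :: y :: w :: l => simp [cap_single, capList, hu]
  exact LinearMap.congr_fun this c

/-- Evaluation of the cup product of a list of two-dimensional cochains. -/
def evalWord : List (S → S → S → ℤ) → Chain S →ₗ[ℤ] ℤ
  | [] => aug
  | u :: us => evalWord us ∘ₗ cap u

lemma evalWord_nil_chain (us : List (S → S → S → ℤ)) (a : ℤ) :
    evalWord us (Finsupp.single [] a) = 0 := by
  cases us with
  | nil => exact aug_single_nil a
  | cons u us => simp [evalWord, cap, capList]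

lemma evalWord_bdry {us : List (S → S → S → ℤ)}
    (hus : ∀ u ∈ us, ∀ a b c d, u b c d - u a c d + u a b d - u a b c = 0) (c : Chain S) :
    evalWord us (bdry c) = 0 := by
  induction us generalizing c with
  | nil => exact aug_bdry c
  | cons u us ih =>
    rw [evalWord, LinearMap.comp_apply, cap_bdry (hus u (by simp)), map_sub,
      ih (fun v hv => hus v (by simp [hv])), map_smul, evalWord_nil_chain]
    simp

lemma evalWord_act {us : List (S → S → S → ℤ)} {f : S → S}
    (hus : ∀ u ∈ us, ∀ x y w, u (f x) (f y) (f w) = u x y w) (c : Chain S) :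
    evalWord us (act f c) = evalWord us c := by
  induction us generalizing c with
  | nil => exact aug_act f c
  | cons u us ih =>
    rw [evalWord, LinearMap.comp_apply, cap_act (hus u (by simp)),
      ih (fun v hv => hus v (by simp [hv]))]
    rfl

lemma exists_of_evalWord_single_ne_zero {us : List (S → S → S → ℤ)} {l : List S}
    (h : evalWord us (Finsupp.single l 1) ≠ 0) :
    ∀ u ∈ us, ∃ x ∈ l, ∃ y ∈ l, ∃ w ∈ l, u x y w ≠ 0 := by
  induction us generalizing l with
  | nil => simp
  | cons u us ih =>
    rw [evalWord, LinearMap.comp_apply, cap_single] at h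
    match l, h with
    | [], h => simp [capList] at h
    | [x], h => simp [capList] at h
    | [x, y], h => simp [capList] at h
    | x :: y :: w :: l, h =>
      have hs : Finsupp.single (w :: l) (u x y w) = u x y w • Finsupp.single (w :: l) (1 : ℤ) := by
        simp
      rw [capList, hs, map_smul, smul_ne_zero_iff] at h
      intro v hv
      rcases List.mem_cons.1 hv with rfl | hv
      · exact ⟨x, by simp, y, by simp, w, by simp, h.1⟩
      · obtain ⟨x', hx, y', hy, w', hw, h'⟩ := ih h.2 v hv
        exact ⟨x', by simp [List.mem_cons.1 hx], y', by simp [List.mem_cons.1 hy], w',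
          by simp [List.mem_cons.1 hw], h'⟩

lemma exists_of_evalWord_ne_zero {us : List (S → S → S → ℤ)} {c : Chain S} {P : List S → Prop}
    (hc : c ∈ On P) (h : evalWord us c ≠ 0) :
    ∃ l, P l ∧ ∀ u ∈ us, ∃ x ∈ l, ∃ y ∈ l, ∃ w ∈ l, u x y w ≠ 0 := by
  by_contra! H
  refine h (eq_on (ψ := 0) (fun l hl => ?_) hc)
  by_contra h'
  obtain ⟨u, hu, H⟩ := H l hl
  obtain ⟨x, hx, y, hy, w, hw, h0⟩ := exists_of_evalWord_single_ne_zero h' u hu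
  exact h0 (H x hx y hy w hw)

end ListChain

namespace ListChain

variable {S : Type*} {r : ℕ}

lemma famD_shift {M : Type*} [AddCommGroup M] (p : ℕ) (t : Fin r → Module.End ℤ M)
    (z : (Fin r → ℤ) → M) (j : Fin r) (m : Fin r → ℤ) :
    famD p t (fun m' => z (m' - Pi.single j 2)) m = famD p t z (m - Pi.single j 2) := by
  refine Finset.sum_congr rfl fun i _ => ?_
  rw [sub_right_comm m (Pi.single j 2)]
  congr 2
  · have : ∑ l ∈ Finset.Iio i, (m - Pi.single j 2 : Fin r → ℤ) l =
        ∑ l ∈ Finset.Iio i, m l - if j ∈ Finset.Iio i then 2 else 0 := by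
      simp [Finset.sum_sub_distrib, Pi.single_apply]
    rw [this]
    split_ifs
    · rw [Int.negOnePow_sub, Int.negOnePow_even 2 (by decide), mul_one]
    · rw [sub_zero]
  · refine altNorm_congr p _ ?_
    by_cases h : i = j
    · subst h
      simp
    · simp [h]

lemma IsSystem.aug_eq {p : ℕ} {σ : Fin r → S → S} {n : ℕ} {z : (Fin r → ℤ) → Chain S}
    (hz : IsSystem p σ n z) (hn : 0 < n) (m : Fin r → ℤ) :
    aug (z m) = if m = 0 then 1 else 0 := by
  split_ifs with h
  · subst h
    rw [aug, LinearMap.comp_apply, hz.bdry_eq 0 (by simpa using hn)]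
    have : famD p (ops σ) z 0 = 0 := by
      refine Finset.sum_eq_zero fun i _ => ?_
      rw [hz.eq_zero (i := i) (by simp)]
      simp
    simp [this]
  · by_cases hneg : ∃ i, m i < 0
    · obtain ⟨i, hi⟩ := hneg
      rw [hz.eq_zero hi, map_zero]
    push Not at hneg
    refine eq_on (ψ := 0) (fun l hl => ?_) (hz.mem m)
    match l, hl with
    | [], _ => simp [aug]
    | [x], hl =>
      exfalso
      have h0 : ∑ i, m i = 0 := by simpa using hl.2
      apply h
      ext i
      exact (Finset.sum_eq_zero_iff_of_nonneg (fun i _ => hneg i)).1 h0 i (Finset.mem_univ i)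
    | x :: y :: l, _ => simp [aug_single_cons]

/-- Evaluating a cup product on a system peels off one linear form at a time. -/
lemma IsSystem.evalWord_cons {p : ℕ} {σ : Fin r → S → S} (hσ : IsTorusAction p σ) (s₀ : S)
    {n : ℕ} {z : (Fin r → ℤ) → Chain S} (hz : IsSystem p σ n z) {u : S → S → S → ℤ}
    {us : List (S → S → S → ℤ)}
    (hu : ∀ v ∈ u :: us, ∀ a b c d, v b c d - v a c d + v a b d - v a b c = 0)
    (huσ : ∀ v ∈ u :: us, ∀ i x y w, v (σ i x) (σ i y) (σ i w) = v x y w)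
    {a : Fin r → ℤ}
    (ha : ∀ m, ∑ i, m i < (n : ℤ) → ((aug (cap u (z m)) : ℤ) : ZMod p) =
      ∑ i, if m = Pi.single i 2 then (a i : ZMod p) else 0)
    {m : Fin r → ℤ} (hm : ∑ i, m i < (n : ℤ)) :
    ((evalWord (u :: us) (z m) : ℤ) : ZMod p) =
      ∑ i, (a i : ZMod p) * ((evalWord us (z (m - Pi.single i 2)) : ℤ) : ZMod p) := by
  let w : (Fin r → ℤ) → Chain S := fun m => cap u (z m) - ∑ i, a i • z (m - Pi.single i 2)
  have hc : ∀ m : Fin r → ℤ, ∃ c : ℤ, ∑ i, m i < (n : ℤ) →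
      (p : ℤ) * c = aug (cap u (z m)) - ∑ i, if m = Pi.single i 2 then a i else 0 := by
    intro m
    by_cases h : ∑ i, m i < (n : ℤ)
    · have : ((aug (cap u (z m)) - ∑ i, if m = Pi.single i 2 then a i else 0 : ℤ) : ZMod p) = 0 := by
        push_cast
        rw [ha m h]
        simp
      obtain ⟨c, hc⟩ := (ZMod.intCast_zmod_eq_zero_iff_dvd _ p).1 this
      exact ⟨c, fun _ => hc.symm⟩
    · exact ⟨0, fun h' => absurd h' h⟩
  choose c hc using hc
  have hwD : ∀ m, famD p (ops σ) w m =
      cap u (famD p (ops σ) z m) - ∑ i, a i • famD p (ops σ) z (m - Pi.single i 2) := by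
    intro m
    have : w = (fun m => cap u (z m)) - ∑ i, a i • fun m => z (m - Pi.single i 2) := by
      ext1 m
      simp [w]
    rw [this, famD_sub, famD_sum]
    simp_rw [famD_smul, famD_shift]
    rw [map_famD p (t' := ops σ) fun i x => cap_act (huσ u (by simp) i) x]
  have hw : ∀ m, ∑ i, m i < (n : ℤ) →
      bdry (w m) = famD p (ops σ) w m + (p * c m) • Finsupp.single [] 1 := by
    intro m hm
    rw [hwD, hc m hm]
    have h1 := cap_bdry (hu u (by simp)) (z m)
    rw [hz.bdry_eq m hm, map_add] at h1
    have h2 : cap u (if m = 0 then Finsupp.single [] 1 else 0) = 0 := by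
      split_ifs <;> simp [cap_single, capList]
    rw [h2, add_zero] at h1
    rw [h1]
    have h3 : ∀ i, bdry (z (m - Pi.single i 2)) = famD p (ops σ) z (m - Pi.single i 2) +
        (if m = Pi.single i 2 then 1 else 0 : ℤ) • Finsupp.single [] 1 := by
      intro i
      rw [hz.bdry_eq]
      · simp only [sub_eq_zero]
        split_ifs <;> simp
      · simp [Finset.sum_sub_distrib]
        omega
    simp only [w, map_sub, map_sum, map_smul, h3, smul_add, Finset.sum_add_distrib, sub_smul,
      Finset.sum_smul, smul_smul, mul_ite, mul_one, mul_zero]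
    abel
  have hneg : ∀ m, ∑ i, m i < 0 → w m = 0 := by
    intro m hm
    have : ∀ i, z (m - Pi.single i 2) = 0 := fun i => hz.eq_zero_of_sum_neg (by
      simp [Finset.sum_sub_distrib]
      omega)
    simp [w, hz.eq_zero_of_sum_neg hm, this]
  have key := cocycle_eq_zero hσ s₀ hneg n hw
    (α := (Int.castAddHom (ZMod p)).toIntLinearMap ∘ₗ evalWord us)
    (fun x => by simp [evalWord_bdry (us := us) fun v hv => hu v (by simp [hv])])
    (fun i x => by simp [evalWord_act (us := us) fun v hv => huσ v (by simp [hv]) i]) m hm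
  simp only [w, map_sub, map_sum, map_smul, sub_eq_zero, LinearMap.comp_apply] at key
  simpa [evalWord] using key

end ListChain

namespace ListChain

variable {S : Type*} {r : ℕ}

/-- An invariant integral two-cocycle whose class modulo `p` is the linear form with
coefficients `a`. -/
structure IsLinearCocycle (p : ℕ) (σ : Fin r → S → S) (n : ℕ) (z : (Fin r → ℤ) → Chain S)
    (u : S → S → S → ℤ) (a : Fin r → ℤ) : Prop where
  cocycle : ∀ x y w v, u y w v - u x w v + u x y v - u x y w = 0
  invariant : ∀ i x y w, u (σ i x) (σ i y) (σ i w) = u x y w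
  aug_cap : ∀ m, ∑ i, m i < (n : ℤ) → ((aug (cap u (z m)) : ℤ) : ZMod p) =
      ∑ i, if m = Pi.single i 2 then (a i : ZMod p) else 0

/-- The linear form with integral coefficients `a`, modulo `p`. -/
def linForm (p : ℕ) (a : Fin r → ℤ) : MvPolynomial (Fin r) (ZMod p) :=
  ∑ i, MvPolynomial.C (a i : ZMod p) * MvPolynomial.X i

lemma linForm_isHomogeneous (p : ℕ) (a : Fin r → ℤ) : (linForm p a).IsHomogeneous 1 := by
  refine MvPolynomial.IsHomogeneous.sum _ _ _ fun i _ => ?_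
  simpa using (MvPolynomial.isHomogeneous_C (Fin r) (a i : ZMod p)).mul
    (MvPolynomial.isHomogeneous_X (ZMod p) i)

lemma linForm_ne_zero {p : ℕ} {a : Fin r → ℤ} (ha : ∃ i, (a i : ZMod p) ≠ 0) :
    linForm p a ≠ 0 := by
  obtain ⟨i, hi⟩ := ha
  intro h
  apply hi
  have := congrArg (MvPolynomial.coeff (Finsupp.single i 1)) h
  rw [linForm, MvPolynomial.coeff_sum] at this
  simp only [MvPolynomial.coeff_C_mul, MvPolynomial.coeff_X, MvPolynomial.coeff_zero] at this
  simpa [Finsupp.single_left_inj] using this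

lemma IsSystem.evalWord_eq_coeff {p : ℕ} {σ : Fin r → S → S} (hσ : IsTorusAction p σ) (s₀ : S)
    {n : ℕ} {z : (Fin r → ℤ) → Chain S} (hz : IsSystem p σ n z)
    {ws : List ((S → S → S → ℤ) × (Fin r → ℤ))}
    (hws : ∀ w ∈ ws, IsLinearCocycle p σ n z w.1 w.2) (k : Fin r →₀ ℕ)
    (hk : ∑ i, 2 * (k i : ℤ) < n) :
    ((evalWord (ws.map Prod.fst) (z fun i => 2 * (k i : ℤ)) : ℤ) : ZMod p) =
      MvPolynomial.coeff k (ws.map fun w => linForm p w.2).prod := by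
  induction ws generalizing k with
  | nil =>
    have hn : 0 < n := by
      have : (0 : ℤ) ≤ ∑ i, 2 * (k i : ℤ) := Finset.sum_nonneg fun i _ => by positivity
      omega
    have : (fun i => 2 * (k i : ℤ)) = 0 ↔ 0 = k := by
      rw [eq_comm (a := (0 : Fin r →₀ ℕ)), funext_iff, Finsupp.ext_iff]
      simp
    simp [evalWord, hz.aug_eq hn, MvPolynomial.coeff_one, this]
  | cons w ws ih =>
    rw [List.map_cons, hz.evalWord_cons hσ s₀ (a := w.2) ?_ ?_ (hws w (by simp)).aug_cap hk,
      List.map_cons, List.prod_cons]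
    · conv_rhs => rw [linForm, Finset.sum_mul]
      rw [MvPolynomial.coeff_sum]
      refine Finset.sum_congr rfl fun i _ => ?_
      rw [mul_assoc, MvPolynomial.coeff_C_mul, MvPolynomial.coeff_X_mul']
      split_ifs with hi
      · congr 1
        have hi' : 1 ≤ k i := Nat.one_le_iff_ne_zero.2 (Finsupp.mem_support_iff.1 hi)
        have e : (fun j => 2 * (k j : ℤ)) - Pi.single i 2 =
            fun j => 2 * ((k - Finsupp.single i 1 : Fin r →₀ ℕ) j : ℤ) := by
          ext j
          by_cases hj : j = i
          · subst hj
            simp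
            omega
          · simp [hj]
        rw [e, ih (fun w hw => hws w (by simp [hw]))]
        refine lt_of_le_of_lt (Finset.sum_le_sum fun j _ => ?_) hk
        simp
      · have hi' : k i = 0 := by simpa using hi
        rw [hz.eq_zero (i := i) (by simp [hi'])]
        simp
    · intro v hv
      rw [← List.map_cons] at hv
      obtain ⟨w', hw', rfl⟩ := List.mem_map.1 hv
      exact (hws w' hw').cocycle
    · intro v hv
      rw [← List.map_cons] at hv
      obtain ⟨w', hw', rfl⟩ := List.mem_map.1 hv
      exact (hws w' hw').invariant

/-- A product of nonzero linear classes does not vanish on a system. -/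
lemma IsSystem.exists_evalWord_ne_zero {p : ℕ} [Fact p.Prime] {σ : Fin r → S → S}
    (hσ : IsTorusAction p σ) (s₀ : S)
    {n : ℕ} {z : (Fin r → ℤ) → Chain S} (hz : IsSystem p σ n z)
    {ws : List ((S → S → S → ℤ) × (Fin r → ℤ))}
    (hws : ∀ w ∈ ws, IsLinearCocycle p σ n z w.1 w.2)
    (ha : ∀ w ∈ ws, ∃ i, (w.2 i : ZMod p) ≠ 0) (hn : 2 * ws.length < n) :
    ∃ m, ∑ i, m i = (2 * ws.length : ℤ) ∧ evalWord (ws.map Prod.fst) (z m) ≠ 0 := by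
  have hne : (ws.map fun w => linForm p w.2).prod ≠ 0 := by
    rw [Ne, List.prod_eq_zero_iff]
    intro h0
    obtain ⟨w, hw, hw0⟩ := List.mem_map.1 h0
    exact linForm_ne_zero (ha w hw) hw0
  have hhom : (ws.map fun w => linForm p w.2).prod.IsHomogeneous ws.length := by
    clear ha hn hne hws
    induction ws with
    | nil => simpa using MvPolynomial.isHomogeneous_one (Fin r) (ZMod p)
    | cons w ws ih =>
      rw [List.map_cons, List.prod_cons, List.length_cons, add_comm]
      exact (linForm_isHomogeneous p w.2).mul ih
  obtain ⟨k, hk⟩ := MvPolynomial.ne_zero_iff.1 hne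
  have hdeg : ∑ i, 2 * (k i : ℤ) = 2 * ws.length := by
    rw [← Finset.mul_sum]
    have := hhom hk
    rw [Finsupp.weight_apply, Finsupp.sum_fintype _ _ (by simp)] at this
    simp at this
    rw [← this]
    push_cast
    rfl
  refine ⟨fun i => 2 * (k i : ℤ), hdeg, fun h0 => hk ?_⟩
  rw [← hz.evalWord_eq_coeff hσ s₀ hws k (by rw [hdeg]; exact_mod_cast hn), h0, Int.cast_zero]

end ListChain

namespace ListChain

variable {S : Type*} {r : ℕ}

/-- The angle swept by a nonvanishing function from `x` to `y`. -/
def sweep (W : S → ℂ) (x y : S) : ℝ := (W y / W x).arg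

/-- The winding number of a nonvanishing function around a triangle. -/
def wind (W : S → ℂ) (x y w : S) : ℤ :=
  round ((sweep W y w - sweep W x w + sweep W x y) / (2 * Real.pi))

lemma sweep_coe_angle {W : S → ℂ} (hW : ∀ x, W x ≠ 0) (x y : S) :
    (sweep W x y : Real.Angle) = ((W y).arg : Real.Angle) - ((W x).arg : Real.Angle) :=
  Complex.arg_div_coe_angle (hW y) (hW x)

lemma two_pi_mul_wind {W : S → ℂ} (hW : ∀ x, W x ≠ 0) (x y w : S) :
    2 * Real.pi * wind W x y w = sweep W y w - sweep W x w + sweep W x y := by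
  have h : ((sweep W y w - sweep W x w + sweep W x y : ℝ) : Real.Angle) = (0 : ℝ) := by
    rw [Real.Angle.coe_add, Real.Angle.coe_sub, sweep_coe_angle hW, sweep_coe_angle hW,
      sweep_coe_angle hW, Real.Angle.coe_zero]
    abel
  obtain ⟨k, hk⟩ := Real.Angle.angle_eq_iff_two_pi_dvd_sub.1 h
  rw [sub_zero] at hk
  have : wind W x y w = k := by
    rw [wind, hk, mul_div_cancel_left₀ _ (by positivity), round_intCast]
  rw [this, hk]

/-- The functional on edges recording swept angles. -/
def sweepL (W : S → ℂ) : Chain S →ₗ[ℤ] ℝ :=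
  Finsupp.linearCombination ℤ fun l => match l with
    | [x, y] => sweep W x y
    | _ => 0

lemma sweepL_single (W : S → ℂ) (l : List S) : sweepL W (Finsupp.single l 1) =
    match l with
    | [x, y] => sweep W x y
    | _ => 0 := by
  simp [sweepL]

lemma sweepL_cons_cons_cons (W : S → ℂ) (x y w : S) (c : Chain S) :
    sweepL W (cons x (cons y (cons w c))) = 0 := by
  have : sweepL W ∘ₗ cons x ∘ₗ cons y ∘ₗ cons w = 0 := by
    ext l : 2
    simp [sweepL_single]
  exact LinearMap.congr_fun this c

lemma two_pi_mul_aug_cap_wind {W : S → ℂ} (hW : ∀ x, W x ≠ 0) (c : Chain S) :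
    2 * Real.pi * (aug (cap (wind W) c) : ℤ) = sweepL W (bdry c) := by
  have : (AddMonoidHom.mulLeft (2 * Real.pi)).toIntLinearMap ∘ₗ
      (Int.castAddHom ℝ).toIntLinearMap ∘ₗ aug ∘ₗ cap (wind W) = sweepL W ∘ₗ bdry := by
    ext l : 2
    match l with
    | [] => simp [cap_single, capList]
    | [x] => simp [bdry_single_cons, cap_single, capList, sweepL_single]
    | [x, y] => simp [bdry_single_cons, cap_single, capList, sweepL_single]
    | [x, y, w] =>
      have hs : Finsupp.single [w] (wind W x y w) =
        wind W x y w • Finsupp.single [w] (1 : ℤ) := by simp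
      simp only [LinearMap.comp_apply, Finsupp.lsingle_apply, cap_single, capList, hs, map_smul,
        aug_single_cons]
      have h := two_pi_mul_wind hW x y w
      simp [bdry_single_cons, sweepL_single]
      linarith
    | x :: y :: w :: v :: l =>
      have hs : Finsupp.single (w :: v :: l) (wind W x y w) =
        wind W x y w • Finsupp.single (w :: v :: l) (1 : ℤ) := by simp
      simp only [LinearMap.comp_apply, Finsupp.lsingle_apply, cap_single, capList, hs, map_smul,
        aug_single_cons]
      simp only [bdry_single_cons, map_sub, cons_single, sweepL_cons_cons_cons, sweepL_single]
      simp
  exact LinearMap.congr_fun this c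

/-- The functional on points recording arguments. -/
def argL (W : S → ℂ) : Chain S →ₗ[ℤ] Real.Angle :=
  Finsupp.linearCombination ℤ fun l => match l with
    | [x] => ((W x).arg : Real.Angle)
    | _ => 0

lemma argL_single (W : S → ℂ) (l : List S) : argL W (Finsupp.single l 1) =
    match l with
    | [x] => ((W x).arg : Real.Angle)
    | _ => 0 := by
  simp [argL]

lemma argL_cons_cons (W : S → ℂ) (x y : S) (c : Chain S) :
    argL W (cons x (cons y c)) = 0 := by
  have : argL W ∘ₗ cons x ∘ₗ cons y = 0 := by
    ext l : 2
    simp [argL_single]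
  exact LinearMap.congr_fun this c

lemma sweepL_coe_angle {W : S → ℂ} (hW : ∀ x, W x ≠ 0) (c : Chain S) :
    (sweepL W c : Real.Angle) = argL W (bdry c) := by
  have : Real.Angle.coeHom.toIntLinearMap ∘ₗ sweepL W = argL W ∘ₗ bdry := by
    ext l : 2
    match l with
    | [] => simp [sweepL_single]
    | [x] => simp [bdry_single_cons, argL_single, sweepL_single]
    | [x, y] => simp [bdry_single_cons, argL_single, sweepL_single, sweep_coe_angle hW]
    | x :: y :: w :: l =>
      simp [bdry_single_cons, argL_single, sweepL_single, argL_cons_cons]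
  exact LinearMap.congr_fun this c

lemma sweepL_act {W : S → ℂ} {f : S → S} {ζ : ℂ} (hζ : ζ ≠ 0) (hf : ∀ x, W (f x) = ζ * W x)
    (c : Chain S) : sweepL W (act f c) = sweepL W c := by
  have : sweepL W ∘ₗ act f = sweepL W := by
    ext l : 2
    match l with
    | [] => simp [sweepL_single]
    | [x] => simp [sweepL_single]
    | [x, y] => simp [sweepL_single, sweep, hf, mul_div_mul_left _ _ hζ]
    | x :: y :: w :: l => simp [sweepL_single]
  exact LinearMap.congr_fun this c

lemma argL_act {W : S → ℂ} (hW : ∀ x, W x ≠ 0) {f : S → S} {ζ : ℂ} (hζ : ζ ≠ 0)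
    (hf : ∀ x, W (f x) = ζ * W x) (c : Chain S) :
    argL W (act f c) = argL W c + aug c • (ζ.arg : Real.Angle) := by
  have : argL W ∘ₗ act f =
      argL W + LinearMap.toSpanSingleton ℤ Real.Angle (ζ.arg : Real.Angle) ∘ₗ aug := by
    ext l : 2
    match l with
    | [] => simp [argL_single, aug_single_nil]
    | [x] =>
      simp [argL_single, hf, aug_single_cons, Complex.arg_mul_coe_angle hζ (hW x), add_comm]
    | x :: y :: l => simp [argL_single, aug_single_cons]
  exact LinearMap.congr_fun this c

/-- The winding cocycle of a nonvanishing function transforming by a character represents the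
linear form of the character. -/
lemma IsSystem.isLinearCocycle_wind {p : ℕ} (hp : p ≠ 0) {σ : Fin r → S → S}
    {n : ℕ} {z : (Fin r → ℤ) → Chain S} (hz : IsSystem p σ n z) {W : S → ℂ} (hW : ∀ x, W x ≠ 0)
    {a : Fin r → ℤ}
    (ha : ∀ i x, W (σ i x) = Complex.exp ((2 * Real.pi * a i / p : ℝ) * Complex.I) * W x) :
    IsLinearCocycle p σ n z (wind W) a where
  cocycle x y w v := by
    have : (2 * Real.pi) * ((wind W y w v - wind W x w v + wind W x y v - wind W x y w : ℤ) : ℝ)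
        = 0 := by
      push_cast
      rw [mul_sub, mul_add, mul_sub, two_pi_mul_wind hW, two_pi_mul_wind hW, two_pi_mul_wind hW,
        two_pi_mul_wind hW]
      ring
    rcases mul_eq_zero.1 this with h | h
    · exact absurd h (by positivity)
    · exact_mod_cast h
  invariant i x y w := by
    simp only [wind, sweep, ha, mul_div_mul_left _ _ (Complex.exp_ne_zero _)]
  aug_cap m hm := by
    have hinv : ∀ i c, sweepL W (act (σ i) c) = sweepL W c := fun i c =>
      sweepL_act (Complex.exp_ne_zero _) (ha i) c
    have hdeg : ∀ m', (¬ ∃ i, m' = Pi.single i 1) → sweepL W (z m') = 0 := by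
      intro m' hm'
      refine eq_on (ψ := 0) (fun l hl => ?_) (hz.mem m')
      match l, hl with
      | [], _ => simp [sweepL_single]
      | [x], _ => simp [sweepL_single]
      | [x, y], hl =>
        exfalso
        apply hm'
        have h1 : ∑ i, m' i = 1 := by
          have := hl.2
          simp at this
          omega
        obtain ⟨i, -, hi⟩ := Finset.exists_lt_of_sum_lt (s := Finset.univ) (f := 0) (g := m')
          (by simp [h1])
        refine ⟨i, ?_⟩
        have h2 : ∑ j, (m' - Pi.single i 1 : Fin r → ℤ) j = 0 := by
          simp [Finset.sum_sub_distrib, h1]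
        rw [Finset.sum_eq_zero_iff_of_nonneg] at h2
        · ext j
          have := h2 j (Finset.mem_univ j)
          simpa [sub_eq_zero] using this
        · intro j _
          by_cases hj : j = i
          · subst hj
            have : 0 < m' j := hi
            simp
            omega
          · simpa [hj] using hl.1 j
      | x :: y :: w :: l, _ => simp [sweepL_single]
    have halt : ∀ i (k : ℤ) c, sweepL W (altNorm p (ops σ i) k c) =
        if Even k then p * sweepL W c else 0 := by
      intro i k c
      rw [map_altNorm p (t' := 1) (φ := sweepL W) (by simpa using hinv i)]
      unfold altNorm
      split_ifs <;> simp
    have hval : 2 * Real.pi * (aug (cap (wind W) (z m)) : ℤ) =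
        ∑ i, if m = Pi.single i 2 then p * sweepL W (z (Pi.single i 1)) else 0 := by
      rw [two_pi_mul_aug_cap_wind hW, hz.bdry_eq m hm, map_add, famD, map_sum]
      have : sweepL W (if m = 0 then Finsupp.single [] 1 else 0) = 0 := by
        split_ifs <;> simp [sweepL_single]
      rw [this, add_zero]
      refine Finset.sum_congr rfl fun i _ => ?_
      rw [map_smul, halt]
      by_cases h2 : m = Pi.single i 2
      · subst h2
        have e : (Pi.single i 2 - Pi.single i 1 : Fin r → ℤ) = Pi.single i 1 := by
          rw [← Pi.single_sub]
          rfl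
        have e' : ∑ l ∈ Finset.Iio i, (Pi.single i 2 : Fin r → ℤ) l = 0 := by
          refine Finset.sum_eq_zero fun j hj => ?_
          simp [(Finset.mem_Iio.1 hj).ne]
        simp [e, e']
      · rw [if_neg h2]
        split_ifs with he
        · rw [hdeg, mul_zero, smul_zero]
          rintro ⟨j, hj⟩
          have hj' : m = Pi.single i 1 + Pi.single j 1 := by rw [← hj]; abel
          by_cases hij : i = j
          · subst hij
            apply h2
            rw [hj', ← Pi.single_add]
            rfl
          · rw [hj'] at he
            simp [hij] at he
        · rw [smul_zero]
    have hsw : ∀ i, (1 : ℤ) < n → ∃ k : ℤ, sweepL W (z (Pi.single i 1)) =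
        2 * Real.pi * a i / p + 2 * Real.pi * k := by
      intro i hn
      have h1 := sweepL_coe_angle hW (z (Pi.single i 1))
      rw [hz.bdry_eq _ (by simpa using hn), if_neg (by simp), add_zero, famD, map_sum,
        Finset.sum_eq_single i] at h1
      · rw [sub_self, map_smul] at h1
        have e' : ∑ l ∈ Finset.Iio i, (Pi.single i 1 : Fin r → ℤ) l = 0 := by
          refine Finset.sum_eq_zero fun j hj => ?_
          simp [(Finset.mem_Iio.1 hj).ne]
        have e2 : altNorm p (ops σ i) ((Pi.single i 1 : Fin r → ℤ) i) = ops σ i - 1 := by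
          simp [altNorm]
        rw [e', e2, LinearMap.sub_apply, map_sub,
          argL_act hW (Complex.exp_ne_zero _) (ha i), hz.aug_eq (by omega)] at h1
        have h3 : (sweepL W (z (Pi.single i 1)) : Real.Angle) =
            ((2 * Real.pi * a i / p : ℝ) : Real.Angle) := by
          have h4 := Complex.arg_cos_add_sin_mul_I_coe_angle
            ((2 * Real.pi * a i / p : ℝ) : Real.Angle)
          rw [Real.Angle.cos_coe, Real.Angle.sin_coe, Complex.ofReal_cos, Complex.ofReal_sin] at h4
          rw [h1, Complex.exp_mul_I, h4]
          simp
        obtain ⟨k, hk⟩ := Real.Angle.angle_eq_iff_two_pi_dvd_sub.1 h3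
        exact ⟨k, by linarith⟩
      · intro j _ hji
        rw [hz.eq_zero (i := j) (by simp [hji])]
        simp
      · simp
    by_cases h2 : ∃ i, m = Pi.single i 2
    · obtain ⟨i, rfl⟩ := h2
      have hinj : ∀ j, (Pi.single i (2 : ℤ) : Fin r → ℤ) = Pi.single j 2 ↔ i = j := by
        intro j
        refine ⟨fun h => ?_, fun h => by rw [h]⟩
        by_contra hij
        have := congrFun h i
        simp [hij] at this
      have hn : (2 : ℤ) < n := by simpa using hm
      obtain ⟨k, hk⟩ := hsw i (by omega)
      simp only [hinj, Finset.sum_ite_eq, Finset.mem_univ, if_true] at hval ⊢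
      rw [hk] at hval
      have hp' : (p : ℝ) ≠ 0 := by exact_mod_cast hp
      have : ((aug (cap (wind W) (z (Pi.single i 2))) : ℤ) : ℝ) = ((a i + p * k : ℤ) : ℝ) := by
        push_cast
        have hpi := Real.pi_ne_zero
        field_simp at hval
        linarith
      rw [Int.cast_inj.1 this]
      simp
    · push Not at h2
      simp only [h2, if_false, Finset.sum_const_zero] at hval ⊢
      rcases mul_eq_zero.1 hval with h | h
      · exact absurd h (by positivity)
      · rw [Int.cast_eq_zero.1 h]
        simp

end ListChain

/-- The group `(ℤ/p)^r`. -/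
abbrev Tor (p r : ℕ) : Type := Fin r → ZMod p

/-- Points with real coordinates indexed by `V × (ℤ/p)^r`, together with a tag in the group. -/
abbrev TPt (V : Type*) (p r : ℕ) : Type _ := (V × Tor p r → ℝ) × Tor p r

namespace ListChain

variable {V : Type*} {p r : ℕ}

/-- The standard generators of the translation action on tagged points. -/
def rot (i : Fin r) (s : TPt V p r) : TPt V p r :=
  (fun a => s.1 (a.1, a.2 - Pi.single i 1), s.2 + Pi.single i 1)

lemma rot_iterate (i : Fin r) (k : ℕ) (s : TPt V p r) :
    (rot i)^[k] s = (fun a => s.1 (a.1, a.2 - k • Pi.single i 1), s.2 + k • Pi.single i 1) := by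
  induction k with
  | zero => simp
  | succ k ih =>
    rw [Function.iterate_succ_apply', ih, rot]
    ext a
    · simp only [succ_nsmul', sub_sub]
    · simp only [succ_nsmul, add_assoc]

lemma isTorusAction_rot : IsTorusAction p (rot : Fin r → TPt V p r → TPt V p r) where
  comm i j x := by
    ext a
    · simp only [rot, sub_right_comm]
    · simp only [rot, Pi.add_apply]
      ring
  iterate i x := by
    rw [rot_iterate]
    have : p • (Pi.single i 1 : Tor p r) = 0 := by
      rw [← Pi.single_smul]
      simp
    simp [this]

lemma famD_delta (σ : Fin r → TPt V p r → TPt V p r) (m : Fin r → ℤ) :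
    famD p (ops σ) (fun m => if m = 0 then Finsupp.single [] 1 else 0) m = 0 := by
  refine Finset.sum_eq_zero fun i _ => ?_
  by_cases h : m - Pi.single i 1 = 0
  · rw [sub_eq_zero] at h
    subst h
    simp [altNorm]
  · simp [h]

variable [DecidableEq V]

/-- The lists whose points are vertices at levels below `k` lying in a common facet. -/
def IsFacetList (lev : ℕ → V) (k : ℤ) (l : List (TPt V p r)) : Prop :=
  ∃ φ : V → Tor p r, ∀ s ∈ l, ∃ j : ℕ, (j : ℤ) < k ∧ s.1 = Pi.single (lev j, φ (lev j)) 1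

lemma rot_single (i : Fin r) (v : V) (g h : Tor p r) :
    (rot i ((Pi.single (v, g) 1, h) : TPt V p r)).1 = Pi.single (v, g + Pi.single i 1) 1 := by
  ext ⟨w, k⟩
  simp only [rot, Pi.single_apply, Prod.mk.injEq, sub_eq_iff_eq_add]

lemma IsFacetList.rot {lev : ℕ → V} {k : ℤ} {l : List (TPt V p r)} (h : IsFacetList lev k l)
    (i : Fin r) : IsFacetList lev k (l.map (rot i)) := by
  obtain ⟨φ, hφ⟩ := h
  refine ⟨fun v => φ v + Pi.single i 1, fun s hs => ?_⟩
  obtain ⟨⟨x, g⟩, hx, rfl⟩ := List.mem_map.1 hs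
  obtain ⟨j, hj, rfl⟩ := hφ _ hx
  exact ⟨j, hj, rot_single i _ _ _⟩

lemma IsFacetList.cons {lev : ℕ → V} {k : ℕ} {l : List (TPt V p r)} (h : IsFacetList lev k l)
    (hk : ∀ j < k, lev j ≠ lev k) :
    IsFacetList lev (k + 1) ((Pi.single (lev k, 0) 1, 0) :: l) := by
  obtain ⟨φ, hφ⟩ := h
  refine ⟨Function.update φ (lev k) 0, fun s hs => ?_⟩
  rcases List.mem_cons.1 hs with rfl | hs
  · exact ⟨k, by omega, by simp⟩
  · obtain ⟨j, hj, hs⟩ := hφ s hs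
    refine ⟨j, by omega, ?_⟩
    rw [Function.update_of_ne (hk j (by omega)), hs]

/-- Iterated joins of the translation action produce a system. -/
lemma exists_isSystem (lev : ℕ → V) (n : ℕ) (hlev : Set.InjOn lev (Set.Iio n)) :
    ∃ z : (Fin r → ℤ) → Chain (TPt V p r), IsSystem p rot n z ∧
      ∀ m, z m ∈ On (IsFacetList lev (∑ i, m i + 1)) := by
  induction n with
  | zero =>
    refine ⟨0, ⟨fun m => Submodule.zero_mem _, fun m hm => ?_⟩, fun m => Submodule.zero_mem _⟩
    have : m ≠ 0 := by rintro rfl; simp at hm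
    simp [famD, this]
  | succ n ih =>
    obtain ⟨z, hz, hF⟩ := ih (hlev.mono (Set.Iio_subset_Iio (by omega)))
    let y : (Fin r → ℤ) → Chain (TPt V p r) := fun m =>
      famD p (ops rot) z m + if m = 0 then Finsupp.single [] 1 else 0
    let z' : (Fin r → ℤ) → Chain (TPt V p r) := fun m =>
      if ∑ i, m i < (n : ℤ) then z m else if ∑ i, m i = (n : ℤ) ∧ ∀ i, 0 ≤ m i then
        cons (Pi.single (lev n, 0) 1, 0) (y m) else 0
    have hlt : ∀ m, ∑ i, m i < (n : ℤ) → z' m = z m := fun m hm => if_pos hm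
    have hy : ∀ m, (∀ i, 0 ≤ m i) → y m ∈ On fun l => (l.length : ℤ) = ∑ i, m i ∧
        IsFacetList lev (∑ i, m i) l := by
      intro m hm
      refine Submodule.add_mem _ (famD_mem p (fun i x hx => ?_) fun i => ?_) ?_
      · exact act_mem_on (fun l hl => ⟨by simpa using hl.1, hl.2.rot i⟩) hx
      · have hs : ∑ j, (m - Pi.single i 1 : Fin r → ℤ) j + 1 = ∑ j, m j := by
          simp [Finset.sum_sub_distrib]
        rw [mem_on]
        intro l hl
        have h1 := mem_on.1 (hz.mem _) l hl
        have h2 := mem_on.1 (hF _) l hl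
        rw [hs] at h1 h2
        exact ⟨h1.2, h2⟩
      · split_ifs with h0
        · subst h0
          exact single_mem_on ⟨by simp, fun _ => 0, by simp⟩ 1
        · exact Submodule.zero_mem _
    refine ⟨z', ⟨fun m => ?_, fun m hm => ?_⟩, fun m => ?_⟩
    · simp only [z']
      split_ifs with h1 h2
      · exact hz.mem m
      · exact cons_mem_on (fun l hl => ⟨h2.2, by simp [hl.1]⟩) (hy m h2.2)
      · exact Submodule.zero_mem _
    · have hD : famD p (ops rot) z' m = famD p (ops rot) z m :=
        famD_congr _ _ fun m' hm' => hlt m' (by push_cast at hm; omega)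
      rw [hD]
      by_cases h1 : ∑ i, m i < (n : ℤ)
      · rw [hlt m h1, hz.bdry_eq m h1]
      have hs : ∑ i, m i = (n : ℤ) := by push_cast at hm; omega
      by_cases h2 : ∀ i, 0 ≤ m i
      · have hz' : z' m = cons (Pi.single (lev n, 0) 1, 0) (y m) := by
          simp only [z']
          rw [if_neg h1, if_pos ⟨hs, h2⟩]
        have hby : bdry (y m) = 0 := by
          simp only [y]
          rw [map_add, bdry_famD]
          have e1 : famD p (ops rot) (fun m' => bdry (z m')) m = famD p (ops rot)
              (famD p (ops rot) z + fun m => if m = 0 then Finsupp.single [] 1 else 0) m :=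
            famD_congr _ _ fun m' hm' => hz.bdry_eq m' (by omega)
          rw [e1, famD_add, famD_delta, famD_famD isTorusAction_rot.ops_pow
            isTorusAction_rot.ops_comm]
          split_ifs <;> simp
        rw [hz', bdry_cons, hby, map_zero, sub_zero]
      · have hz' : z' m = 0 := by
          simp only [z']
          rw [if_neg h1, if_neg (fun h => h2 h.2)]
        push Not at h2
        obtain ⟨j, hj⟩ := h2
        have : famD p (ops rot) z m = 0 := by
          refine Finset.sum_eq_zero fun i _ => ?_
          rw [hz.eq_zero (i := j)]
          · simp
          · by_cases hij : j = i
            · subst hij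
              simp
              omega
            · simpa [hij] using hj
        have h0 : m ≠ 0 := by rintro rfl; simp at hj
        simp [hz', this, h0]
    · simp only [z']
      split_ifs with h1 h2
      · exact hF m
      · rw [h2.1]
        refine cons_mem_on (fun l hl => ?_) (hy m h2.2)
        have := hl.2
        rw [h2.1] at this
        exact this.cons fun j hj => hlev.ne (by simp; omega) (by simp) (by omega)
      · exact Submodule.zero_mem _

end ListChain

namespace ListChain

section Subdivision

variable {E T : Type*} [NormedAddCommGroup E] [NormedSpace ℝ E]

/-- The barycentre of a nonempty list of tagged points, with the tag of its head. -/
def bary (s : E × T) (l : List (E × T)) : E × T :=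
  (((l.length : ℝ) + 1)⁻¹ • ((s :: l).map Prod.fst).sum, s.2)

/-- Barycentric subdivision of lists of length `k`. -/
def sdF : ℕ → Chain (E × T) →ₗ[ℤ] Chain (E × T)
  | 0 => LinearMap.id
  | k + 1 => Finsupp.linearCombination ℤ fun l => match l with
    | [] => 0
    | s :: l => cons (bary s l) (sdF k (bdry (Finsupp.single (s :: l) 1)))

lemma sdF_succ_cons (k : ℕ) (s : E × T) (l : List (E × T)) :
    sdF (k + 1) (Finsupp.single (s :: l) 1) =
      cons (bary s l) (sdF k (bdry (Finsupp.single (s :: l) 1))) := by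
  simp [sdF]

lemma sdF_succ_nil (k : ℕ) : sdF (k + 1) (Finsupp.single ([] : List (E × T)) 1) = 0 := by
  simp [sdF]

lemma bdry_mem_on_length {S : Type*} {k : ℕ} {c : Chain S} (hc : c ∈ On fun l => l.length = k + 1) :
    bdry c ∈ On fun l => l.length = k :=
  map_mem_on bdry (fun l hl => on_mono (fun l' hl' => by have := hl'.2; omega)
    (bdry_mem_on_sublist l)) hc

lemma sdF_zero (c : Chain (E × T)) : sdF 0 c = c := rfl

lemma bdry_sdF (k : ℕ) {c : Chain (E × T)} (hc : c ∈ On fun l => l.length = k + 1) :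
    bdry (sdF (k + 1) c) = sdF k (bdry c) := by
  suffices H : ∀ l : List (E × T), l.length = k + 1 →
      (bdry ∘ₗ sdF (k + 1)) (Finsupp.single l 1) = (sdF k ∘ₗ bdry) (Finsupp.single l 1) from
    eq_on H hc
  intro l hl
  match l, hl with
  | s :: l, hl =>
    rw [LinearMap.comp_apply, LinearMap.comp_apply, sdF_succ_cons, bdry_cons]
    have h0 : bdry (sdF k (bdry (Finsupp.single (s :: l) 1))) = 0 := by
      cases k with
      | zero => rw [sdF_zero, bdry_bdry]
      | succ k => rw [bdry_sdF k (bdry_mem_on_length (single_mem_on hl 1)), bdry_bdry, map_zero]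
    rw [h0, map_zero, sub_zero]

/-- Maps of tagged points that are linear on points. -/
lemma sdF_act {f : E × T → E × T} (ρ : E →ₗ[ℝ] E) (τ : T → T) (hf : ∀ s, f s = (ρ s.1, τ s.2))
    (k : ℕ) (c : Chain (E × T)) : sdF k (act f c) = act f (sdF k c) := by
  induction k generalizing c with
  | zero => rfl
  | succ k ih =>
    have : sdF (k + 1) ∘ₗ act f = act f ∘ₗ sdF (k + 1) := by
      ext l : 2
      cases l with
      | nil => simp [sdF_succ_nil]
      | cons s l =>
        have hb : bary (f s) (l.map f) = f (bary s l) := by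
          have h1 : ∀ l : List (E × T), ((l.map f).map Prod.fst).sum = ρ (l.map Prod.fst).sum := by
            intro l
            induction l with
            | nil => simp
            | cons a l ih =>
              rw [List.map_cons, List.map_cons, List.sum_cons, ih, List.map_cons, List.sum_cons,
                map_add, hf]
          rw [bary, hf (bary s l), bary, ← List.map_cons, h1, List.length_map, map_smul, hf s]
        have h2 : act f (Finsupp.single (s :: l) 1) = Finsupp.single (f s :: l.map f) 1 := by simp
        simp only [LinearMap.comp_apply, Finsupp.lsingle_apply]
        rw [h2, sdF_succ_cons, sdF_succ_cons, act_cons, hb, ← ih, act_bdry, h2]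
    exact LinearMap.congr_fun this c

lemma sdF_length (k : ℕ) {c : Chain (E × T)} (hc : c ∈ On fun l => l.length = k) :
    sdF k c ∈ On fun l => l.length = k := by
  induction k generalizing c with
  | zero => exact hc
  | succ k ih =>
    refine map_mem_on _ (fun l hl => ?_) hc
    match l, hl with
    | s :: l, hl =>
      rw [sdF_succ_cons]
      exact cons_mem_on (fun l hl => by simp [hl])
        (ih (bdry_mem_on_length (single_mem_on hl 1)))

/-- The points of the list are pairwise at distance at most `δ`. -/
def MeshLE (δ : ℝ) (l : List (E × T)) : Prop := ∀ s ∈ l, ∀ t ∈ l, dist s.1 t.1 ≤ δ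

lemma dist_bary_le {N : ℕ} {δ : ℝ} {s : E × T} {l : List (E × T)} (hl : l.length ≤ N)
    (hδ : MeshLE δ (s :: l)) {t : E × T} (ht : t ∈ s :: l) :
    dist t.1 (bary s l).1 ≤ N / (N + 1) * δ := by
  classical
  have hδ0 : 0 ≤ δ := by simpa using hδ s (by simp) s (by simp)
  have hpos : (0 : ℝ) < l.length + 1 := by positivity
  have key : ∀ l' : List (E × T), (∀ a ∈ l', a ∈ s :: l) →
      ‖(l'.length : ℝ) • t.1 - (l'.map Prod.fst).sum‖ ≤ l'.length * δ := by
    intro l' hl'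
    induction l' with
    | nil => simp
    | cons a l' ih =>
      have h1 := ih fun b hb => hl' b (by simp [hb])
      have h2 := hδ t ht a (hl' a (by simp))
      rw [dist_eq_norm] at h2
      have e : ((a :: l').length : ℝ) • t.1 - ((a :: l').map Prod.fst).sum =
          (t.1 - a.1) + ((l'.length : ℝ) • t.1 - (l'.map Prod.fst).sum) := by
        simp [add_smul]
        abel
      rw [e]
      refine (norm_add_le _ _).trans ?_
      push_cast [List.length_cons]
      linarith
  have hperm := List.perm_cons_erase ht
  have hlen : ((s :: l).erase t).length = l.length := by
    rw [List.length_erase_of_mem ht]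
    simp
  have hsum : ((s :: l).map Prod.fst).sum = t.1 + (((s :: l).erase t).map Prod.fst).sum := by
    rw [(hperm.map Prod.fst).sum_eq]
    simp
  have h3 := key ((s :: l).erase t) fun a ha => List.mem_of_mem_erase ha
  rw [hlen] at h3
  have e : t.1 - (bary s l).1 = ((l.length : ℝ) + 1)⁻¹ •
      ((l.length : ℝ) • t.1 - (((s :: l).erase t).map Prod.fst).sum) := by
    rw [bary, hsum, ← sub_eq_zero]
    match_scalars <;> field_simp <;> ring
  rw [dist_eq_norm, e, norm_smul, norm_inv, Real.norm_of_nonneg hpos.le]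
  have h4 : (l.length : ℝ) / (l.length + 1) ≤ N / (N + 1) := by
    rw [div_le_div_iff₀ hpos (by positivity)]
    have : (l.length : ℝ) ≤ N := by exact_mod_cast hl
    nlinarith
  calc ((l.length : ℝ) + 1)⁻¹ * _ ≤ ((l.length : ℝ) + 1)⁻¹ * (l.length * δ) := by gcongr
    _ = (l.length : ℝ) / (l.length + 1) * δ := by field_simp
    _ ≤ _ := by gcongr

/-- Subdividing shrinks the mesh and stays in the convex hull. -/
lemma sdF_mem_on {N : ℕ} {δ : ℝ} (k : ℕ) {C : Set E} (hC : Convex ℝ C) {l : List (E × T)}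
    (hk : k ≤ N + 1) (hl : l.length = k) (hlC : ∀ s ∈ l, s.1 ∈ C) (hδ : MeshLE δ l) :
    sdF k (Finsupp.single l 1) ∈ On fun l' => (∀ s ∈ l', s.1 ∈ C) ∧ MeshLE (N / (N + 1) * δ) l' := by
  suffices H : sdF k (Finsupp.single l 1) ∈ On fun l' =>
      (∀ s ∈ l', s.1 ∈ convexHull ℝ (Prod.fst '' {s | s ∈ l})) ∧ MeshLE (N / (N + 1) * δ) l' by
    refine on_mono (fun l' hl' => ⟨fun s hs => ?_, hl'.2⟩) H
    refine convexHull_min ?_ hC (hl'.1 s hs)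
    rintro _ ⟨t, ht, rfl⟩
    exact hlC t ht
  clear hlC hC C
  induction k generalizing l with
  | zero =>
    rw [List.length_eq_zero_iff] at hl
    subst hl
    exact single_mem_on ⟨by simp, by simp [MeshLE]⟩ 1
  | succ k ih =>
    match l, hl with
    | s :: l, hl =>
      have hδ0 : 0 ≤ δ := by simpa using hδ s (by simp) s (by simp)
      have hlN : l.length ≤ N := by simp at hl; omega
      have hball : convexHull ℝ (Prod.fst '' {t | t ∈ s :: l}) ⊆
          Metric.closedBall (bary s l).1 (N / (N + 1) * δ) := by
        refine convexHull_min ?_ (convex_closedBall _ _)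
        rintro _ ⟨t, ht, rfl⟩
        exact dist_bary_le hlN hδ ht
      have hmem : (bary s l).1 ∈ convexHull ℝ (Prod.fst '' {t | t ∈ s :: l}) := by
        have h1 : (bary s l).1 = ∑ i : Fin (l.length + 1), ((l.length : ℝ) + 1)⁻¹ •
            ((s :: l).get i).1 := by
          rw [← Finset.smul_sum, bary]
          conv_lhs => rw [← List.ofFn_get (s :: l), List.map_ofFn, List.sum_ofFn]
          rfl
        rw [h1]
        refine (convex_convexHull ℝ _).sum_mem (fun i _ => by positivity) ?_ fun i _ => ?_
        · simp
          field_simp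
        · exact subset_convexHull ℝ _ ⟨_, List.get_mem _ _, rfl⟩
      rw [sdF_succ_cons]
      have hface : sdF k (bdry (Finsupp.single (s :: l) 1)) ∈ On fun l' =>
          (∀ t ∈ l', t.1 ∈ convexHull ℝ (Prod.fst '' {t | t ∈ s :: l})) ∧
            MeshLE (N / (N + 1) * δ) l' := by
        refine map_mem_on (sdF k) (fun l' hl' => ?_) (bdry_mem_on_sublist (s :: l))
        refine on_mono (fun l'' hl'' => ⟨fun t ht => convexHull_mono ?_ (hl''.1 t ht), hl''.2⟩)
          (ih (by omega) (by omega) fun a ha b hb =>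
            hδ a (hl'.1.subset ha) b (hl'.1.subset hb))
        rintro _ ⟨t, ht, rfl⟩
        exact ⟨t, hl'.1.subset ht, rfl⟩
      refine cons_mem_on (fun l' hl' => ⟨?_, ?_⟩) hface
      · intro t ht
        rcases List.mem_cons.1 ht with rfl | ht
        · exact hmem
        · exact hl'.1 t ht
      · intro a ha b hb
        rcases List.mem_cons.1 ha with rfl | ha <;> rcases List.mem_cons.1 hb with rfl | hb
        · simp only [dist_self]
          positivity
        · rw [dist_comm]
          exact hball (hl'.1 b hb)
        · exact hball (hl'.1 a ha)
        · exact hl'.2 a ha b hb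

end Subdivision

end ListChain

namespace ListChain

/-- The subdivision of a system is a system. -/
lemma IsSystem.sd {E T : Type*} [NormedAddCommGroup E] [NormedSpace ℝ E] {p r n : ℕ}
    {σ : Fin r → E × T → E × T} {z : (Fin r → ℤ) → Chain (E × T)} (hz : IsSystem p σ n z)
    (ρ : Fin r → E →ₗ[ℝ] E) (τ : Fin r → T → T) (hσ : ∀ i s, σ i s = (ρ i s.1, τ i s.2)) :
    IsSystem p σ n fun m => sdF ((∑ i, m i).toNat + 1) (z m) := by
  have hlen : ∀ m, z m ∈ On fun l => l.length = (∑ i, m i).toNat + 1 := fun m =>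
    on_mono (fun l hl => by
      have h1 : 0 ≤ ∑ i, m i := Finset.sum_nonneg fun i _ => hl.1 i
      have h2 := hl.2
      omega) (hz.mem m)
  refine ⟨fun m => ?_, fun m hm => ?_⟩
  · by_cases h : ∀ i, 0 ≤ m i
    · refine on_mono (fun l hl => ⟨h, ?_⟩) (sdF_length _ (hlen m))
      have h1 : 0 ≤ ∑ i, m i := Finset.sum_nonneg fun i _ => h i
      rw [hl]
      push_cast
      rw [Int.toNat_of_nonneg h1]
    · push Not at h
      obtain ⟨i, hi⟩ := h
      rw [hz.eq_zero hi, map_zero]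
      exact Submodule.zero_mem _
  · rw [bdry_sdF _ (hlen m), hz.bdry_eq m hm, map_add]
    congr 1
    · rw [map_famD p (t' := ops σ) fun i x => sdF_act (ρ i) (τ i) (hσ i) _ x]
      refine famD_congr _ _ fun m' hm' => ?_
      by_cases h : 0 ≤ ∑ i, m' i
      · congr 2
        omega
      · rw [hz.eq_zero_of_sum_neg (not_le.1 h), map_zero, map_zero]
    · split_ifs with h
      · subst h
        simp [sdF_zero]
      · simp

variable {V : Type*} [Fintype V] {p r : ℕ} [NeZero p]

/-- The facet of the complex on `V × (ℤ/p)^r` given by a choice function. -/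
def facetSet (φ : V → Tor p r) : Set (V × Tor p r → ℝ) :=
  {x | (∀ a, 0 ≤ x a) ∧ ∑ a, x a = 1 ∧ ∀ v h, h ≠ φ v → x (v, h) = 0}

lemma convex_facetSet (φ : V → Tor p r) : Convex ℝ (facetSet φ) := by
  rintro x ⟨hx0, hx1, hx2⟩ y ⟨hy0, hy1, hy2⟩ a b ha hb hab
  refine ⟨fun c => ?_, ?_, fun v h hv => ?_⟩
  · have := hx0 c
    have := hy0 c
    simp only [Pi.add_apply, Pi.smul_apply, smul_eq_mul]
    positivity
  · simp [Finset.sum_add_distrib, ← Finset.mul_sum, hx1, hy1, hab]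
  · simp [hx2 v h hv, hy2 v h hv]

lemma facetSet_le_one {φ : V → Tor p r} {x : V × Tor p r → ℝ} (hx : x ∈ facetSet φ)
    (a : V × Tor p r) : x a ≤ 1 := by
  rw [← hx.2.1]
  exact Finset.single_le_sum (fun b _ => hx.1 b) (Finset.mem_univ a)

lemma isCompact_facetSet (φ : V → Tor p r) : IsCompact (facetSet φ) := by
  refine (isCompact_Icc (a := (0 : V × Tor p r → ℝ)) (b := 1)).of_isClosed_subset ?_
    fun x hx => ⟨hx.1, facetSet_le_one hx⟩
  have h1 : facetSet φ = (⋂ a, {x | 0 ≤ x a}) ∩ {x | ∑ a, x a = 1} ∩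
      ⋂ v, ⋂ h, ⋂ (_ : h ≠ φ v), {x | x (v, h) = 0} := by
    ext x
    simp [facetSet, and_assoc]
  rw [h1]
  refine ((isClosed_iInter fun a => isClosed_le (by fun_prop) (by fun_prop)).inter
    (isClosed_eq (by fun_prop) (by fun_prop))).inter ?_
  exact isClosed_iInter fun v => isClosed_iInter fun h => isClosed_iInter fun _ =>
    isClosed_eq (by fun_prop) (by fun_prop)

lemma meshLE_of_facet {φ : V → Tor p r} {l : List (TPt V p r)} (hl : ∀ s ∈ l, s.1 ∈ facetSet φ) :
    MeshLE 1 l := by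
  intro s hs t ht
  rw [dist_pi_le_iff zero_le_one]
  intro a
  have h1 := (hl s hs).1 a
  have h2 := facetSet_le_one (hl s hs) a
  have h3 := (hl t ht).1 a
  have h4 := facetSet_le_one (hl t ht) a
  rw [Real.dist_eq, abs_le]
  constructor <;> linarith

/-- There are systems of arbitrarily small mesh. -/
lemma exists_fine_isSystem {N : ℕ} (hV : N + 1 ≤ Fintype.card V) (k : ℕ) :
    ∃ z : (Fin r → ℤ) → Chain (TPt V p r), IsSystem p rot (N + 1) z ∧
      ∀ m, ∑ i, m i < ((N + 1 : ℕ) : ℤ) → z m ∈ On fun l =>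
        (∃ φ : V → Tor p r, ∀ s ∈ l, s.1 ∈ facetSet φ) ∧ MeshLE ((N / (N + 1) : ℝ) ^ k * 1) l := by
  classical
  induction k with
  | zero =>
    have : Nonempty V := Fintype.card_pos_iff.1 (by omega)
    let e : ℕ → V := fun j => if h : j < Fintype.card V then (Fintype.equivFin V).symm ⟨j, h⟩
      else Classical.arbitrary V
    have he : Set.InjOn e (Set.Iio (N + 1)) := by
      intro i hi j hj hij
      have hi' : i < Fintype.card V := lt_of_lt_of_le hi hV
      have hj' : j < Fintype.card V := lt_of_lt_of_le hj hV
      simpa [e, hi', hj'] using hij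
    obtain ⟨z, hz, hF⟩ := exists_isSystem (p := p) (r := r) e (N + 1) he
    refine ⟨z, hz, fun m _ => on_mono (fun l hl => ?_) (hF m)⟩
    obtain ⟨φ, hφ⟩ := hl
    have hl' : ∀ s ∈ l, s.1 ∈ facetSet φ := by
      intro s hs
      obtain ⟨j, -, hj⟩ := hφ s hs
      rw [hj]
      refine ⟨fun a => ?_, by simp, fun v h hv => ?_⟩
      · rw [Pi.single_apply]
        split_ifs <;> simp
      · rw [Pi.single_apply, if_neg]
        rintro ⟨rfl, rfl⟩
        exact hv rfl
    exact ⟨⟨φ, hl'⟩, by simpa using meshLE_of_facet hl'⟩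
  | succ k ih =>
    obtain ⟨z, hz, hF⟩ := ih
    refine ⟨_, hz.sd (fun i => LinearMap.funLeft ℝ ℝ fun a => (a.1, a.2 - Pi.single i 1))
      (fun i g => g + Pi.single i 1) fun i s => rfl, fun m hm => ?_⟩
    have h1 : z m ∈ On fun l => l.length = (∑ i, m i).toNat + 1 ∧
        ((∃ φ : V → Tor p r, ∀ s ∈ l, s.1 ∈ facetSet φ) ∧
          MeshLE ((N / (N + 1) : ℝ) ^ k * 1) l) := by
      rw [mem_on]
      intro l hl
      have h1 := mem_on.1 (hz.mem m) l hl
      have h2 : 0 ≤ ∑ i, m i := Finset.sum_nonneg fun i _ => h1.1 i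
      exact ⟨by omega, mem_on.1 (hF m hm) l hl⟩
    refine map_mem_on _ ?_ h1
    rintro l ⟨hl, ⟨φ, hφ⟩, hδ⟩
    refine on_mono ?_ (sdF_mem_on (N := N) _ (convex_facetSet φ) (by omega) hl hφ hδ)
    rintro l' ⟨h1, h2⟩
    refine ⟨⟨φ, h1⟩, ?_⟩
    rwa [pow_succ', mul_assoc]

end ListChain

namespace ListChain

lemma wind_eq_zero {S : Type*} {W : S → ℂ} (hW : ∀ x, W x ≠ 0) {x y w : S}
    (hxy : ‖W y - W x‖ < ‖W x‖) (hyw : ‖W w - W y‖ < ‖W y‖) (hxw : ‖W w - W x‖ < ‖W x‖) :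
    wind W x y w = 0 := by
  have key : ∀ {a b : S}, ‖W b - W a‖ < ‖W a‖ → |sweep W a b| < Real.pi / 2 := by
    intro a b h
    rw [sweep, Complex.abs_arg_lt_pi_div_two_iff]
    left
    have h1 : ‖W b / W a - 1‖ < 1 := by
      rw [div_sub_one (hW a), norm_div, div_lt_one (norm_pos_iff.2 (hW a))]
      exact h
    have h2 := (Complex.abs_re_le_norm (W b / W a - 1)).trans_lt h1
    rw [abs_lt] at h2
    simp at h2
    linarith [h2.1]
  have h1 := abs_lt.1 (key hxy)
  have h2 := abs_lt.1 (key hyw)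
  have h3 := abs_lt.1 (key hxw)
  have h4 := two_pi_mul_wind hW x y w
  have hpi := Real.pi_pos
  have h5 : |(wind W x y w : ℝ)| < 1 := by
    rw [abs_lt]
    constructor <;> nlinarith
  rw [abs_lt] at h5
  have h6 : (-1 : ℤ) < wind W x y w := by exact_mod_cast h5.1
  have h7 : wind W x y w < (1 : ℤ) := by exact_mod_cast h5.2
  omega

end ListChain

section Characters

variable {p r : ℕ} [NeZero p]

/-- The characters of `(ℤ/p)^r`. -/
def torChar (a : Tor p r) : AddChar (Tor p r) ℂ :=
  ZMod.stdAddChar.compAddMonoidHom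
    { toFun := fun g => a ⬝ᵥ g, map_zero' := by simp, map_add' := by simp [dotProduct_add] }

lemma torChar_apply (a g : Tor p r) : torChar a g = ZMod.stdAddChar (a ⬝ᵥ g) := rfl

lemma torChar_single (a : Tor p r) (i : Fin r) :
    torChar a (Pi.single i 1) =
      Complex.exp ((2 * Real.pi * ((a i).val : ℤ) / p : ℝ) * Complex.I) := by
  rw [torChar_apply, dotProduct_single_one]
  have := ZMod.stdAddChar_coe (N := p) ((a i).val : ℤ)
  rw [Int.cast_natCast, ZMod.natCast_zmod_val] at this
  rw [this]
  congr 1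
  push_cast
  ring

lemma sum_torChar_apply (g : Tor p r) :
    ∑ a : Tor p r, torChar a g = if g = 0 then (Fintype.card (Tor p r) : ℂ) else 0 := by
  have h1 : ∀ a : Tor p r, torChar a g = torChar g a := fun a => by
    rw [torChar_apply, torChar_apply, dotProduct_comm]
  simp_rw [h1]
  rw [AddChar.sum_eq_ite]
  congr 1
  refine propext ⟨fun h => ?_, fun h => ?_⟩
  · ext i
    have h2 : torChar g (Pi.single i 1) = 1 := by rw [h]; rfl
    rw [torChar_apply, dotProduct_single_one, ← AddChar.map_zero_eq_one (ZMod.stdAddChar (N := p))] at h2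
    exact ZMod.injective_stdAddChar h2
  · subst h
    ext a
    simp [torChar_apply]

/-- A function whose nontrivial Fourier coefficients vanish is constant. -/
lemma eq_of_forall_sum_torChar_eq_zero {F : Tor p r → ℂ}
    (h : ∀ a : Tor p r, a ≠ 0 → ∑ g, torChar a g * F g = 0) (g g' : Tor p r) : F g = F g' := by
  have key : ∀ k, (Fintype.card (Tor p r) : ℂ) * F k = ∑ g, F g := by
    intro k
    have h1 : ∑ a : Tor p r, torChar a (-k) * ∑ g, torChar a g * F g = ∑ g, F g := by
      rw [Finset.sum_eq_single 0]
      · simp [torChar_apply]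
      · intro a _ ha
        rw [h a ha, mul_zero]
      · simp
    rw [← h1]
    simp_rw [Finset.mul_sum, ← mul_assoc, ← AddChar.map_add_eq_mul]
    rw [Finset.sum_comm]
    simp_rw [← Finset.sum_mul, sum_torChar_apply, neg_add_eq_zero]
    simp
  have hne : (Fintype.card (Tor p r) : ℂ) ≠ 0 := by exact_mod_cast Fintype.card_ne_zero
  exact mul_left_cancel₀ hne ((key g).trans (key g').symm)

end Characters

section Core

open ListChain

variable {V : Type*} {p r : ℕ}

/-- The Fourier transform of a function evaluated on the blocks of a point. -/
def blockFourier [NeZero p] (F : (V → ℝ) → ℂ) (a : Tor p r) (x : V × Tor p r → ℝ) : ℂ :=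
  ∑ g, torChar a g * F fun v => x (v, g)

open Classical in
/-- A nonvanishing equivariant modification of the Fourier transform. -/
def blockFourierMod [NeZero p] (F : (V → ℝ) → ℂ) (a : Tor p r) (s : TPt V p r) : ℂ :=
  if blockFourier F a s.1 = 0 then torChar a s.2 else blockFourier F a s.1

lemma torChar_ne_zero [NeZero p] (a g : Tor p r) : torChar a g ≠ 0 :=
  (AddChar.val_isUnit (torChar a) g).ne_zero

lemma blockFourierMod_ne_zero [NeZero p] (F : (V → ℝ) → ℂ) (a : Tor p r) (s : TPt V p r) :
    blockFourierMod F a s ≠ 0 := by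
  unfold blockFourierMod
  split_ifs with h
  · exact torChar_ne_zero a _
  · exact h

lemma blockFourier_rot [NeZero p] (F : (V → ℝ) → ℂ) (a : Tor p r) (i : Fin r) (s : TPt V p r) :
    blockFourier F a (rot i s).1 = torChar a (Pi.single i 1) * blockFourier F a s.1 := by
  unfold blockFourier rot
  rw [Finset.mul_sum, ← Equiv.sum_comp (Equiv.addRight (Pi.single i 1 : Tor p r))]
  refine Finset.sum_congr rfl fun g _ => ?_
  simp only [Equiv.coe_addRight, add_sub_cancel_right, AddChar.map_add_eq_mul]
  ring

lemma blockFourierMod_rot [NeZero p] (F : (V → ℝ) → ℂ) (a : Tor p r) (i : Fin r)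
    (s : TPt V p r) :
    blockFourierMod F a (rot i s) = torChar a (Pi.single i 1) * blockFourierMod F a s := by
  unfold blockFourierMod
  simp only [blockFourier_rot, mul_eq_zero, torChar_ne_zero, false_or]
  split_ifs
  · rw [rot, AddChar.map_add_eq_mul, mul_comm]
  · rfl

/-- Complex test functions on a large enough vertex set have a common coincidence on
disjoint faces. -/
theorem exists_facet_forall_eq [Fintype V] {J : Type*} [Fintype J] [Fact p.Prime] (Y : J → (V → ℝ) → ℂ)
    (hY : ∀ j, Continuous (Y j))
    (hV : 2 * (Fintype.card J * (Fintype.card (Tor p r) - 1)) + 1 ≤ Fintype.card V) :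
    ∃ φ : V → Tor p r, ∃ x ∈ facetSet φ, ∀ j g g',
      Y j (fun v => x (v, g)) = Y j (fun v => x (v, g')) := by
  classical
  let K := J × {a : Tor p r // a ≠ 0}
  have hK : Fintype.card K = Fintype.card J * (Fintype.card (Tor p r) - 1) := by
    simp [K, Fintype.card_subtype_compl]
  let N := 2 * Fintype.card K
  let W : K → TPt V p r → ℂ := fun k => blockFourierMod (Y k.1) k.2
  have hW : ∀ k x, W k x ≠ 0 := fun k x => blockFourierMod_ne_zero _ _ _
  let ws : List ((TPt V p r → TPt V p r → TPt V p r → ℤ) × (Fin r → ℤ)) :=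
    (Finset.univ : Finset K).toList.map fun k => (wind (W k), fun i => ((k.2.1 i).val : ℤ))
  have hlist : ∀ n : ℕ, ∃ l : List (TPt V p r), l ≠ [] ∧
      (∃ φ : V → Tor p r, ∀ s ∈ l, s.1 ∈ facetSet φ) ∧ MeshLE ((N / (N + 1) : ℝ) ^ n * 1) l ∧
      ∀ k : K, ∃ x ∈ l, ∃ y ∈ l, ∃ w ∈ l, wind (W k) x y w ≠ 0 := by
    intro n
    obtain ⟨z, hz, hF⟩ := exists_fine_isSystem (V := V) (p := p) (r := r) (N := N)
      (by simpa [N, hK] using hV) n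
    have hlen : ws.length = Fintype.card K := by simp [ws]
    obtain ⟨m, hm, hne⟩ := hz.exists_evalWord_ne_zero isTorusAction_rot (0 : TPt V p r) (ws := ws)
      (by
        intro w hw
        obtain ⟨k, -, rfl⟩ := List.mem_map.1 hw
        refine hz.isLinearCocycle_wind (NeZero.ne p) (hW k) fun i x => ?_
        rw [← torChar_single]
        exact blockFourierMod_rot _ _ i x)
      (by
        intro w hw
        obtain ⟨k, -, rfl⟩ := List.mem_map.1 hw
        obtain ⟨i, hi⟩ := Function.ne_iff.1 k.2.2
        exact ⟨i, by simpa using hi⟩)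
      (by rw [hlen]; omega)
    rw [hlen] at hm
    have hmem : z m ∈ On fun l => l ≠ [] ∧
        (∃ φ : V → Tor p r, ∀ s ∈ l, s.1 ∈ facetSet φ) ∧ MeshLE ((N / (N + 1) : ℝ) ^ n * 1) l := by
      rw [mem_on]
      intro l hl
      have h1 := (mem_on.1 (hz.mem m) l hl).2
      refine ⟨?_, mem_on.1 (hF m ?_) l hl⟩
      · rintro rfl
        simp at h1
        omega
      · rw [hm]
        push_cast [N]
        omega
    obtain ⟨l, ⟨h1, h2, h3⟩, h4⟩ := exists_of_evalWord_ne_zero hmem hne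
    refine ⟨l, h1, h2, h3, fun k => h4 _ ?_⟩
    simp [ws]
  choose l hl0 hlφ hmesh hwind using hlist
  have hhead : ∀ n, ∃ s, s ∈ l n := fun n => List.exists_mem_of_ne_nil _ (hl0 n)
  choose s hs using hhead
  have hcpt : IsCompact (⋃ φ : V → Tor p r, facetSet φ) :=
    isCompact_iUnion fun φ => isCompact_facetSet φ
  obtain ⟨x, hx, θ, hθ, hlim⟩ := hcpt.tendsto_subseq (x := fun n => (s n).1) fun n => by
    obtain ⟨φ, hφ⟩ := hlφ n
    exact Set.mem_iUnion.2 ⟨φ, hφ _ (hs n)⟩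
  obtain ⟨φ, hφ⟩ := Set.mem_iUnion.1 hx
  refine ⟨φ, x, hφ, fun j g g' => ?_⟩
  refine eq_of_forall_sum_torChar_eq_zero (F := fun g => Y j fun v => x (v, g)) (fun a ha => ?_) g g'
  by_contra hne
  change blockFourier (Y j) a x ≠ 0 at hne
  set c := blockFourier (Y j) a x with hc
  have hcont : Continuous (blockFourier (Y j) a : (V × Tor p r → ℝ) → ℂ) := by
    unfold blockFourier
    refine continuous_finsetSum _ fun g _ => continuous_const.mul ((hY j).comp ?_)
    fun_prop
  have hcpos : 0 < ‖c‖ := norm_pos_iff.2 hne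
  obtain ⟨ε, hε, hball⟩ := Metric.continuousAt_iff.1 (hcont.continuousAt (x := x)) (‖c‖ / 4)
    (by positivity)
  have hmesh0 : Filter.Tendsto (fun n => ((N / (N + 1) : ℝ) ^ (θ n) * 1)) Filter.atTop (nhds 0) := by
    simp only [mul_one]
    refine (tendsto_pow_atTop_nhds_zero_of_lt_one (by positivity) ?_).comp hθ.tendsto_atTop
    rw [div_lt_one (by positivity)]
    linarith
  obtain ⟨n, hn1, hn2⟩ := ((hmesh0.eventually_lt_const (half_pos hε)).and
    ((Metric.tendsto_nhds.1 hlim) (ε / 2) (half_pos hε))).exists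
  obtain ⟨y₁, h₁, y₂, h₂, y₃, h₃, hw⟩ := hwind (θ n) (j, ⟨a, ha⟩)
  have hclose : ∀ y ∈ l (θ n), ‖W (j, ⟨a, ha⟩) y - c‖ < ‖c‖ / 4 := by
    intro y hy
    have hyx : dist y.1 x < ε := by
      have h5 := hmesh (θ n) y hy _ (hs (θ n))
      have h6 := dist_triangle y.1 (s (θ n)).1 x
      simp only [Function.comp_apply] at hn2
      linarith
    have h7 := hball hyx
    rw [dist_eq_norm] at h7
    have h8 : blockFourier (Y j) a y.1 ≠ 0 := by
      intro h0
      rw [h0, zero_sub, norm_neg] at h7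
      linarith
    have h9 : W (j, ⟨a, ha⟩) y = blockFourier (Y j) a y.1 := if_neg h8
    rw [h9]
    exact h7
  have hpair : ∀ y ∈ l (θ n), ∀ y' ∈ l (θ n),
      ‖W (j, ⟨a, ha⟩) y' - W (j, ⟨a, ha⟩) y‖ < ‖W (j, ⟨a, ha⟩) y‖ := by
    intro y hy y' hy'
    have h5 := hclose y hy
    have h6 := hclose y' hy'
    have h7 := norm_sub_le (W (j, ⟨a, ha⟩) y' - c) (W (j, ⟨a, ha⟩) y - c)
    rw [sub_sub_sub_cancel_right] at h7
    have h8 := norm_sub_norm_le c (c - W (j, ⟨a, ha⟩) y)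
    rw [sub_sub_cancel, norm_sub_rev c] at h8
    linarith
  exact hw (wind_eq_zero (hW _) (hpair _ h₁ _ h₂) (hpair _ h₂ _ h₃) (hpair _ h₁ _ h₃))

end Core

/-- The part of the weight vector `x` carried by the vertices of colour `g`. -/
def colorPart {V G : Type*} [DecidableEq G] (φ : V → G) (x : V → ℝ) (g : G) : V → ℝ :=
  fun v => if φ v = g then x v else 0

theorem exists_coloring_forall_colorPart_eq {V J : Type*} {p r : ℕ} [Fintype V] [Fintype J]
    [Fact p.Prime] (Ψ : J → (V → ℝ) → ℝ) (hΨ : ∀ j, Continuous (Ψ j))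
    (hV : Fintype.card J * (Fintype.card (Tor p r) - 1) + 1 ≤ Fintype.card V) :
    ∃ φ : V → Tor p r, ∃ x : V → ℝ, (∀ v, 0 ≤ x v) ∧ ∑ v, x v = 1 ∧
      ∀ j g g', Ψ j (colorPart φ x g) = Ψ j (colorPart φ x g') := by
  classical
  set m := Fintype.card (Tor p r) - 1 with hm
  have hpos : 0 < Fintype.card (Tor p r) := Fintype.card_pos
  let Y : J → ((V ⊕ J × Fin m) → ℝ) → ℂ := fun j y =>
    (Ψ j (fun v => y (Sum.inl v)) : ℂ) + ((∑ k, y (Sum.inr (j, k)) : ℝ) : ℂ) * Complex.I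
  have hY : ∀ j, Continuous (Y j) := by
    intro j
    have h1 : Continuous fun y : (V ⊕ J × Fin m) → ℝ => Ψ j (fun v => y (Sum.inl v)) :=
      (hΨ j).comp (by fun_prop)
    have h2 : Continuous fun y : (V ⊕ J × Fin m) → ℝ => ∑ k, y (Sum.inr (j, k)) := by fun_prop
    exact (Complex.continuous_ofReal.comp h1).add
      ((Complex.continuous_ofReal.comp h2).mul continuous_const)
  obtain ⟨φ, x, ⟨hx0, hx1, hxφ⟩, hx⟩ := exists_facet_forall_eq (p := p) (r := r) Y hY (by
    rw [Fintype.card_sum, Fintype.card_prod, Fintype.card_fin, ← hm]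
    linarith)
  have hre : ∀ j g g', Ψ j (fun v => x (Sum.inl v, g)) = Ψ j (fun v => x (Sum.inl v, g')) := by
    intro j g g'
    have := congrArg Complex.re (hx j g g')
    simpa [Y, Complex.add_re, Complex.mul_re, -Complex.ofReal_sum] using this
  have him : ∀ j g g', ∑ k, x (Sum.inr (j, k), g) = ∑ k, x (Sum.inr (j, k), g') := by
    intro j g g'
    have := congrArg Complex.im (hx j g g')
    simpa [Y, Complex.add_im, Complex.mul_im, -Complex.ofReal_sum] using this
  have hextra : ∀ j k g, x (Sum.inr (j, k), g) = 0 := by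
    intro j k g
    obtain ⟨g', hg'⟩ : ∃ g', ∀ k, φ (Sum.inr (j, k)) ≠ g' := by
      by_contra! hcon
      have := Fintype.card_le_of_surjective (fun k : Fin m => φ (Sum.inr (j, k))) hcon
      rw [Fintype.card_fin] at this
      omega
    have h0 : ∑ k, x (Sum.inr (j, k), g) = 0 := by
      rw [him j g g']
      exact Finset.sum_eq_zero fun k _ => hxφ _ _ (hg' k).symm
    exact (Finset.sum_eq_zero_iff_of_nonneg fun k _ => hx0 _).1 h0 k (Finset.mem_univ _)
  have hpart : ∀ g, colorPart (fun v => φ (Sum.inl v))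
      (fun v => x (Sum.inl v, φ (Sum.inl v))) g = fun v => x (Sum.inl v, g) := by
    intro g
    funext v
    unfold colorPart
    split_ifs with h
    · rw [← h]
    · exact (hxφ _ _ (Ne.symm h)).symm
  refine ⟨fun v => φ (Sum.inl v), fun v => x (Sum.inl v, φ (Sum.inl v)), fun v => hx0 _, ?_, ?_⟩
  · rw [← hx1, Fintype.sum_prod_type, Fintype.sum_sum_type]
    rw [Finset.sum_eq_zero (s := (Finset.univ : Finset (J × Fin m))) (fun a _ =>
      Finset.sum_eq_zero fun g _ => hextra a.1 a.2 g), add_zero]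
    refine Finset.sum_congr rfl fun v _ => ?_
    rw [Finset.sum_eq_single (φ (Sum.inl v))]
    · exact fun h _ hne => hxφ _ _ hne
    · simp
  · intro j g g'
    rw [hpart, hpart]
    exact hre j g g'

section Generic

/-- On a line of families that passes through a linearly independent one, only finitely many
families are linearly dependent. -/
lemma finite_setOf_not_linearIndependent_line {ι F : Type*} [Fintype ι] [AddCommGroup F]
    [Module ℝ F] (f₀ f₁ : ι → F) (h₁ : LinearIndependent ℝ f₁) :
    {t : ℝ | ¬ LinearIndependent ℝ (f₀ + t • (f₁ - f₀))}.Finite := by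
  set T₀ := Fintype.linearCombination ℝ f₀ with hT₀
  set T₁ := Fintype.linearCombination ℝ f₁ with hT₁
  obtain ⟨L, hL⟩ := T₁.exists_leftInverse_of_injective (LinearMap.ker_eq_bot.2
    ((linearIndependent_iff_injective_fintypeLinearCombination).1 h₁))
  let K : Module.End ℝ (ι → ℝ) := L ∘ₗ (T₁ - T₀)
  refine (Module.End.finite_hasEigenvalue (f := K)).image (fun μ => 1 - μ⁻¹) |>.subset ?_
  intro t ht
  rw [Set.mem_ofPred_eq, Fintype.linearIndependent_iff] at ht
  push Not at ht
  obtain ⟨c, hc, i, hi⟩ := ht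
  have hc0 : c ≠ 0 := fun h => hi (by simp [h])
  have h2 : T₀ c + t • (T₁ c - T₀ c) = 0 := by
    rw [← hc]
    simp only [hT₀, hT₁, Fintype.linearCombination_apply, Pi.add_apply, Pi.smul_apply, Pi.sub_apply,
      smul_add, smul_sub, Finset.sum_add_distrib, Finset.sum_sub_distrib, Finset.smul_sum]
    simp only [smul_comm t]
  have h3 : L (T₁ c) = c := by simpa using LinearMap.congr_fun hL c
  have h4 : K c = c - L (T₀ c) := by simp [K, h3]
  have h5 : L (T₀ c) + t • K c = 0 := by
    have := congrArg L h2
    simpa [K] using this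
  have h6 : c = (1 - t) • K c := by
    rw [sub_smul, one_smul]
    linear_combination (exp := 1) h5 - h4
  have ht1 : 1 - t ≠ 0 := by
    intro h0
    rw [h0, zero_smul] at h6
    exact hc0 h6
  refine ⟨(1 - t)⁻¹, ?_, by simp⟩
  refine Module.End.hasEigenvalue_of_hasEigenvector (x := c) ⟨?_, hc0⟩
  rw [Module.End.mem_eigenspace_iff]
  conv_rhs => rw [h6]
  rw [smul_smul, inv_mul_cancel₀ ht1, one_smul]

/-- Homogeneous coordinates of a point of `ℝ^d`. -/
def homog {d : ℕ} (w : Fin d → ℝ) : Option (Fin d) → ℝ := fun o => o.elim 1 w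

/-- The vertices `0, e₁, …, e_d`. -/
def unitPt {d : ℕ} : Option (Fin d) → Fin d → ℝ := fun o => o.elim 0 fun k => Pi.single k 1

lemma homog_unitPt_injective {d : ℕ} {C C' : Option (Fin d) → ℝ}
    (h : ∀ j, ∑ k, C k * homog (unitPt k) j = ∑ k, C' k * homog (unitPt k) j) : C = C' := by
  have h1 : ∀ k, C (some k) = C' (some k) := by
    intro k
    simpa [Fintype.sum_option, homog, unitPt, Pi.single_apply] using h (some k)
  have h2 := h none
  simp only [Fintype.sum_option, homog, Option.elim, mul_one, h1] at h2
  funext o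
  cases o with
  | none => linarith
  | some k => exact h1 k

variable {I G : Type*} [DecidableEq G] {d : ℕ}

/-- The vectors whose independence expresses that the point configurations `w` restricted to the
colour classes of `γ` on `A` span flats in general position. -/
def flatVec (A : Finset I) (γ : I → G) (w : I → Fin d → ℝ) :
    A ⊕ Option (Fin d) → G × Option (Fin d) → ℝ :=
  Sum.elim (fun a x => if γ a = x.1 then homog (w a) x.2 else 0)
    (fun k x => if k = x.2 then 1 else 0)

lemma exists_labels [Fintype G] [Nonempty G] (A : Finset I) (γ : I → G)
    (hγ : ∀ g, (A.filter fun i => γ i = g).card ≤ d + 1)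
    (hA : A.card ≤ (d + 1) * (Fintype.card G - 1)) :
    ∃ κ : I → Option (Fin d), (∀ i ∈ A, ∀ i' ∈ A, γ i = γ i' → κ i = κ i' → i = i') ∧
      ∀ j, ∃ g, ∀ i ∈ A, γ i = g → κ i ≠ j := by
  classical
  let τ : G → Finset I := fun g => A.filter fun i => γ i = g
  have hsum : ∑ g, (τ g).card = A.card :=
    (Finset.card_eq_sum_card_fiberwise fun i _ => Finset.mem_coe.2 (Finset.mem_univ (γ i))).symm
  have hcard : Fintype.card (Option (Fin d)) ≤
      Fintype.card (Σ g, Fin (d + 1 - (τ g).card)) := by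
    rw [Fintype.card_sigma, Fintype.card_option, Fintype.card_fin]
    simp only [Fintype.card_fin]
    have h1 : ∑ g, (d + 1 - (τ g).card) + ∑ g, (τ g).card = Fintype.card G * (d + 1) := by
      rw [← Finset.sum_add_distrib, Finset.sum_congr rfl fun g _ => Nat.sub_add_cancel (hγ g)]
      simp
    obtain ⟨n, hn⟩ := Nat.exists_eq_succ_of_ne_zero (Fintype.card_ne_zero (α := G))
    rw [hn] at h1 hA
    simp only [Nat.succ_eq_add_one, Nat.add_sub_cancel] at h1 hA
    nlinarith
  obtain ⟨e⟩ := Function.Embedding.nonempty_of_card_le hcard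
  let K : G → Finset (Option (Fin d)) := fun g => Finset.univ.filter fun j => (e j).1 = g
  have hK : ∀ g, (K g).card ≤ d + 1 - (τ g).card := by
    intro g
    have : (K g).card ≤ Fintype.card (Fin (d + 1 - (τ g).card)) := by
      rw [← Fintype.card_coe]
      refine Fintype.card_le_of_injective
        (fun j => cast (by rw [(Finset.mem_filter.1 j.2).2]) (e j.1).2) ?_
      intro j j' hjj
      have hj := (Finset.mem_filter.1 j.2).2
      have hj' := (Finset.mem_filter.1 j'.2).2
      apply Subtype.ext
      apply e.injective
      refine Sigma.ext (hj.trans hj'.symm) ?_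
      have h1 := (cast_heq (by rw [hj]) (e j.1).2 :
        HEq (cast (by rw [hj]) (e j.1).2 : Fin (d + 1 - (τ g).card)) (e j.1).2)
      have h2 := (cast_heq (by rw [hj']) (e j'.1).2 :
        HEq (cast (by rw [hj']) (e j'.1).2 : Fin (d + 1 - (τ g).card)) (e j'.1).2)
      exact h1.symm.trans ((heq_of_eq hjj).trans h2)
    simpa using this
  have hemb : ∀ g, Nonempty (τ g ↪ ((K g)ᶜ : Finset (Option (Fin d)))) := by
    intro g
    refine Function.Embedding.nonempty_of_card_le ?_
    rw [Fintype.card_coe, Fintype.card_coe, Finset.card_compl, Fintype.card_option,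
      Fintype.card_fin]
    have := hK g
    have := hγ g
    change (τ g).card ≤ d + 1 at this
    omega
  let κ' : ∀ g, τ g ↪ ((K g)ᶜ : Finset (Option (Fin d))) := fun g => (hemb g).some
  let κ : I → Option (Fin d) := fun i =>
    if h : i ∈ τ (γ i) then (κ' (γ i) ⟨i, h⟩ : Option (Fin d)) else none
  have hκ : ∀ g i (h : i ∈ τ g), κ i = κ' g ⟨i, h⟩ := by
    intro g i h
    obtain rfl : γ i = g := (Finset.mem_filter.1 h).2
    exact dif_pos h
  refine ⟨κ, ?_, ?_⟩
  · intro i hi i' hi' hγi hκi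
    have m : i ∈ τ (γ i) := Finset.mem_filter.2 ⟨hi, rfl⟩
    have m' : i' ∈ τ (γ i) := Finset.mem_filter.2 ⟨hi', hγi.symm⟩
    rw [hκ _ i m, hκ _ i' m'] at hκi
    exact congrArg Subtype.val ((κ' _).injective (Subtype.ext hκi))
  · intro j
    refine ⟨(e j).1, fun i hi hg hj => ?_⟩
    have m : i ∈ τ (e j).1 := Finset.mem_filter.2 ⟨hi, hg⟩
    have h1 := (κ' _ ⟨i, m⟩).2
    rw [← hκ _ i m, hj, Finset.mem_compl] at h1
    exact h1 (Finset.mem_filter.2 ⟨Finset.mem_univ _, rfl⟩)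

lemma sum_flatVec (A : Finset I) (γ : I → G) (w : I → Fin d → ℝ) (s : A ⊕ Option (Fin d) → ℝ)
    (g : G) (j : Option (Fin d)) :
    (∑ a, s a • flatVec A γ w a) (g, j) =
      (∑ a : A, if γ a = g then s (Sum.inl a) * homog (w a) j else 0) + s (Sum.inr j) := by
  simp [Fintype.sum_sum_type, flatVec, Finset.sum_apply]

lemma exists_linearIndependent_flatVec [Fintype G] [Nonempty G] (A : Finset I) (γ : I → G)
    (hγ : ∀ g, (A.filter fun i => γ i = g).card ≤ d + 1)
    (hA : A.card ≤ (d + 1) * (Fintype.card G - 1)) :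
    ∃ w : I → Fin d → ℝ, LinearIndependent ℝ (flatVec A γ w) := by
  classical
  obtain ⟨κ, hinj, hmiss⟩ := exists_labels A γ hγ hA
  refine ⟨fun i => unitPt (κ i), ?_⟩
  rw [Fintype.linearIndependent_iff]
  intro s hs
  let C : G → Option (Fin d) → ℝ := fun g k =>
    ∑ a : A, if γ a = g ∧ κ a = k then s (Sum.inl a) else 0
  have hC : ∀ g j, ∑ k, C g k * homog (unitPt k) j = - s (Sum.inr j) := by
    intro g j
    have h1 := congrFun hs (g, j)
    rw [sum_flatVec, Pi.zero_apply] at h1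
    rw [← eq_neg_iff_add_eq_zero] at h1
    rw [← h1]
    simp only [C, Finset.sum_mul]
    rw [Finset.sum_comm]
    refine Finset.sum_congr rfl fun a _ => ?_
    rw [Finset.sum_eq_single (κ a)]
    · split_ifs <;> simp_all
    · intro k _ hk
      rw [if_neg fun h => hk h.2.symm, zero_mul]
    · simp
  have hC0 : ∀ g k, C g k = 0 := by
    intro g k
    obtain ⟨g', hg'⟩ := hmiss k
    rw [homog_unitPt_injective (C := C g) (C' := C g') fun j => by rw [hC, hC]]
    refine Finset.sum_eq_zero fun a _ => if_neg fun h => ?_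
    exact hg' a a.2 h.1 h.2
  rintro (a | j)
  · have h1 := hC0 (γ a) (κ a)
    rw [← h1]
    simp only [C]
    rw [Finset.sum_eq_single a]
    · simp
    · intro a' _ ha'
      refine if_neg fun h => ha' (Subtype.ext (hinj _ a'.2 _ a.2 h.1 h.2))
    · simp
  · have h1 := hC (Classical.arbitrary G) j
    simp only [hC0, zero_mul, Finset.sum_const_zero] at h1
    linarith

lemma continuous_flatVec (A : Finset I) (γ : I → G) :
    Continuous fun w : I → Fin d → ℝ => flatVec A γ w := by
  refine continuous_pi fun a => continuous_pi fun x => ?_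
  rcases a with a | k
  · simp only [flatVec, Sum.elim_inl]
    split_ifs
    · rcases x with ⟨g, _ | k⟩
      · exact continuous_const
      · exact (continuous_apply k).comp (continuous_apply (a : I))
    · exact continuous_const
  · exact continuous_const

lemma flatVec_line (A : Finset I) (γ : I → G) (w₀ w₁ : I → Fin d → ℝ) (t : ℝ) :
    flatVec A γ (w₀ + t • (w₁ - w₀)) =
      flatVec A γ w₀ + t • (flatVec A γ w₁ - flatVec A γ w₀) := by
  funext a x
  rcases a with a | k
  · rcases x with ⟨g, _ | k⟩ <;> by_cases h : γ a = g <;> simp [flatVec, homog, h]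
  · simp [flatVec]

/-- Arbitrarily close to any finite point configuration there is one in general position. -/
theorem exists_generic_near [Fintype I] [Fintype G] [Nonempty G] (w₀ : I → Fin d → ℝ) {ε : ℝ}
    (hε : 0 < ε) :
    ∃ w : I → Fin d → ℝ, dist w w₀ < ε ∧ ∀ (A : Finset I) (γ : I → G),
      (∀ g, (A.filter fun i => γ i = g).card ≤ d + 1) →
      A.card ≤ (d + 1) * (Fintype.card G - 1) → LinearIndependent ℝ (flatVec A γ w) := by
  classical
  let X := {x : Finset I × (I → G) // (∀ g, (x.1.filter fun i => x.2 i = g).card ≤ d + 1) ∧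
    x.1.card ≤ (d + 1) * (Fintype.card G - 1)}
  have hdense : Dense (⋂ x : X, {w : I → Fin d → ℝ | LinearIndependent ℝ (flatVec x.1.1 x.1.2 w)}) := by
    refine dense_iInter_of_isOpen (fun x => ?_) fun x => ?_
    · exact isOpen_setOfPred_linearIndependent.preimage (continuous_flatVec x.1.1 x.1.2)
    · obtain ⟨w₁, hw₁⟩ := exists_linearIndependent_flatVec x.1.1 x.1.2 x.2.1 x.2.2
      intro w
      have hfin := finite_setOf_not_linearIndependent_line (flatVec x.1.1 x.1.2 w) _ hw₁
      have hd : Dense {t : ℝ | LinearIndependent ℝ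
          (flatVec x.1.1 x.1.2 w + t • (flatVec x.1.1 x.1.2 w₁ - flatVec x.1.1 x.1.2 w))} := by
        have := (Set.Finite.countable hfin).dense_compl ℝ
        convert this using 1
        ext t
        simp
      have hcont : Continuous fun t : ℝ => w + t • (w₁ - w) := by fun_prop
      have h0 : (fun t : ℝ => w + t • (w₁ - w)) 0 = w := by simp
      rw [← h0]
      refine closure_mono ?_ (image_closure_subset_closure_image hcont ⟨0, hd 0, rfl⟩)
      rintro _ ⟨t, ht, rfl⟩
      change LinearIndependent ℝ _ at ht
      rwa [← flatVec_line] at ht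
  obtain ⟨w, hw, hd⟩ := hdense.exists_dist_lt w₀ hε
  refine ⟨w, by rwa [dist_comm], fun A γ h1 h2 => ?_⟩
  exact Set.mem_iInter.1 hw ⟨(A, γ), h1, h2⟩

end Generic

section FineCover

/-- The barycentre of the points `c i`, `i ∈ S`. -/
def avg {I E : Type*} [AddCommGroup E] [Module ℝ E] (c : I → E) (S : Finset I) : E :=
  ∑ i ∈ S, (S.card : ℝ)⁻¹ • c i

lemma avg_mem {I E : Type*} [AddCommGroup E] [Module ℝ E] {c : I → E} {S : Finset I} {C : Set E}
    (hS : S.Nonempty) (hC : Convex ℝ C) (hc : ∀ i ∈ S, c i ∈ C) : avg c S ∈ C := by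
  refine hC.sum_mem (fun _ _ => by positivity) ?_ hc
  rw [Finset.sum_const, nsmul_eq_mul, mul_inv_cancel₀]
  exact_mod_cast hS.card_pos.ne'

lemma dist_avg_le {I E : Type*} [NormedAddCommGroup E] [NormedSpace ℝ E] {c : I → E} {T : Finset I}
    {N : ℕ} {δ : ℝ} (hT : T.card ≤ N + 1) (hδ : ∀ i ∈ T, ∀ j ∈ T, dist (c i) (c j) ≤ δ)
    {t : I} (ht : t ∈ T) : dist (c t) (avg c T) ≤ N / (N + 1) * δ := by
  classical
  have hδ0 : 0 ≤ δ := by simpa using hδ t ht t ht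
  have hcpos : 0 < T.card := Finset.card_pos.2 ⟨t, ht⟩
  have hpos : (0 : ℝ) < T.card := by exact_mod_cast hcpos
  have h1 : c t - avg c T = ∑ j ∈ T.erase t, (T.card : ℝ)⁻¹ • (c t - c j) := by
    have h2 : c t = ∑ _j ∈ T, (T.card : ℝ)⁻¹ • c t := by
      rw [Finset.sum_const, ← Nat.cast_smul_eq_nsmul ℝ, smul_smul, mul_inv_cancel₀ hpos.ne', one_smul]
    rw [avg]
    conv_lhs => rw [h2]
    rw [← Finset.sum_sub_distrib, ← Finset.add_sum_erase _ _ ht, sub_self, zero_add]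
    exact Finset.sum_congr rfl fun j _ => (smul_sub _ _ _).symm
  rw [dist_eq_norm, h1]
  have h3 : ∀ j ∈ T.erase t, ‖(T.card : ℝ)⁻¹ • (c t - c j)‖ ≤ (T.card : ℝ)⁻¹ * δ := by
    intro j hj
    rw [norm_smul, Real.norm_of_nonneg (by positivity), ← dist_eq_norm]
    exact mul_le_mul_of_nonneg_left (hδ t ht j (Finset.mem_of_mem_erase hj)) (by positivity)
  refine (norm_sum_le_of_le _ h3).trans ?_
  rw [Finset.sum_const, nsmul_eq_mul, Finset.card_erase_of_mem ht, Nat.cast_sub hcpos, ← mul_assoc]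
  refine mul_le_mul_of_nonneg_right ?_ hδ0
  have h4 : (T.card : ℝ) ≤ N + 1 := by exact_mod_cast hT
  rw [← div_eq_mul_inv, div_le_div_iff₀ hpos (by positivity)]
  push_cast
  nlinarith

/-- The weight of the vertex `S` of the barycentric subdivision at the point with (unnormalised)
coordinates `y`. -/
def sdWeight {I : Type*} [Fintype I] [DecidableEq I] (y : I → ℝ) (S : Finset I) : ℝ :=
  ∏ v ∈ S, (max (y v) 0 * ∏ u ∈ Sᶜ, max (y v - y u) 0)

variable {I : Type*} [Fintype I] [DecidableEq I] {y : I → ℝ}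

lemma sdWeight_nonneg (y : I → ℝ) (S : Finset I) : 0 ≤ sdWeight y S :=
  Finset.prod_nonneg fun _ _ => mul_nonneg (le_max_right _ _)
    (Finset.prod_nonneg fun _ _ => le_max_right _ _)

lemma max_zero_ne_zero_iff {a : ℝ} : max a 0 ≠ 0 ↔ 0 < a := by
  rw [Ne, max_eq_right_iff, not_le]

lemma sdWeight_ne_zero_iff {S : Finset I} :
    sdWeight y S ≠ 0 ↔ ∀ v ∈ S, 0 < y v ∧ ∀ u ∉ S, y u < y v := by
  simp only [sdWeight, Finset.prod_ne_zero_iff, mul_ne_zero_iff, max_zero_ne_zero_iff,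
    Finset.mem_compl, sub_pos]

lemma subset_or_subset_of_sdWeight {S T : Finset I} (hS : sdWeight y S ≠ 0)
    (hT : sdWeight y T ≠ 0) : S ⊆ T ∨ T ⊆ S := by
  rw [sdWeight_ne_zero_iff] at hS hT
  by_contra! h
  obtain ⟨⟨v, hv, hv'⟩, ⟨u, hu, hu'⟩⟩ := And.intro (Finset.not_subset.1 h.1) (Finset.not_subset.1 h.2)
  exact lt_asymm ((hS v hv).2 u hu') ((hT u hu).2 v hv')

lemma continuous_sdWeight (S : Finset I) : Continuous fun y : I → ℝ => sdWeight y S := by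
  unfold sdWeight
  fun_prop

lemma sdWeight_card_le (A : Finset {S : Finset I // S.Nonempty})
    (hA : ∀ S ∈ A, sdWeight y S.1 ≠ 0) : A.card ≤ (Finset.univ.filter fun v => 0 < y v).card := by
  classical
  set P := Finset.univ.filter fun v => 0 < y v
  have h1 : A.card ≤ (Finset.Icc 1 P.card).card := by
    refine Finset.card_le_card_of_injOn (fun S => S.1.card) (fun S hS => ?_) ?_
    · rw [Finset.mem_coe, Finset.mem_Icc]
      refine ⟨S.2.card_pos, Finset.card_le_card fun v hv => ?_⟩
      exact Finset.mem_filter.2 ⟨Finset.mem_univ _, (sdWeight_ne_zero_iff.1 (hA S hS) v hv).1⟩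
    · intro S hS T hT hST
      apply Subtype.ext
      rcases subset_or_subset_of_sdWeight (hA S hS) (hA T hT) with h | h
      · exact Finset.eq_of_subset_of_card_le h hST.ge
      · exact (Finset.eq_of_subset_of_card_le h hST.le).symm
  simpa using h1

/-- Iterated barycentric subdivisions of a simplex, described by the positions `c` of the vertices
and the unnormalised coordinates `β` of the points of the simplex. -/
theorem exists_fineCover (V : Type) [Fintype V] {N : ℕ} (hN : Fintype.card V ≤ N + 1) (n : ℕ) :
    ∃ (I : Type) (_ : Fintype I) (c : I → V → ℝ) (β : (V → ℝ) → I → ℝ),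
      Continuous β ∧ (∀ i, c i ∈ stdSimplex ℝ V) ∧ (∀ y i, 0 ≤ β y i) ∧
      (∀ y, (∃ v, 0 < y v) → ∃ i, β y i ≠ 0) ∧
      (∀ y i, β y i ≠ 0 → ∀ v, ¬ 0 < y v → c i v = 0) ∧
      (∀ y, ∀ A : Finset I, (∀ i ∈ A, β y i ≠ 0) →
        A.card ≤ (Finset.univ.filter fun v => 0 < y v).card) ∧
      (∀ y i j, β y i ≠ 0 → β y j ≠ 0 → dist (c i) (c j) ≤ (N / (N + 1) : ℝ) ^ n) := by
  classical
  induction n with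
  | zero =>
    refine ⟨V, inferInstance, fun v => Pi.single v 1, fun y v => max (y v) 0, by fun_prop,
      fun v => single_mem_stdSimplex ℝ v, fun y v => le_max_right _ _, ?_, ?_, ?_, ?_⟩
    · rintro y ⟨v, hv⟩
      exact ⟨v, max_zero_ne_zero_iff.2 hv⟩
    · intro y i hi v hv
      rw [max_zero_ne_zero_iff] at hi
      refine Pi.single_eq_of_ne ?_ _
      rintro rfl
      exact hv hi
    · intro y A hA
      refine Finset.card_le_card fun v hv => ?_
      exact Finset.mem_filter.2 ⟨Finset.mem_univ _, max_zero_ne_zero_iff.1 (hA v hv)⟩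
    · intro y i j _ _
      rw [pow_zero, dist_pi_le_iff zero_le_one]
      intro v
      simp only [Pi.single_apply]
      split_ifs <;> simp
  | succ n ih =>
    obtain ⟨I, _, c, β, hβ, hc, hβ0, hβex, hβc, hβcard, hmesh⟩ := ih
    have hact : ∀ {y} {S : Finset I}, sdWeight (β y) S ≠ 0 → ∀ i ∈ S, β y i ≠ 0 :=
      fun h i hi => ((sdWeight_ne_zero_iff.1 h i hi).1).ne'
    refine ⟨{S : Finset I // S.Nonempty}, inferInstance, fun S => avg c S.1,
      fun y S => sdWeight (β y) S.1, ?_, ?_, ?_, ?_, ?_, ?_, ?_⟩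
    · exact continuous_pi fun S => (continuous_sdWeight S.1).comp hβ
    · exact fun S => avg_mem S.2 (convex_stdSimplex ℝ V) fun i _ => hc i
    · exact fun y S => sdWeight_nonneg _ _
    · intro y hy
      obtain ⟨i, hi⟩ := hβex y hy
      refine ⟨⟨Finset.univ.filter fun i => β y i ≠ 0, ⟨i, by simpa using hi⟩⟩, ?_⟩
      rw [sdWeight_ne_zero_iff]
      intro v hv
      have h1 : 0 < β y v := (hβ0 y v).lt_of_ne' (by simpa using hv)
      refine ⟨h1, fun u hu => ?_⟩
      have h2 : β y u = 0 := by simpa using hu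
      rwa [h2]
    · intro y S hS v hv
      change (avg c S.1) v = 0
      rw [avg, Finset.sum_apply]
      refine Finset.sum_eq_zero fun i hi => ?_
      rw [Pi.smul_apply, hβc y i (hact hS i hi) v hv, smul_zero]
    · intro y A hA
      refine (sdWeight_card_le A hA).trans ?_
      exact hβcard y _ fun i hi => (Finset.mem_filter.1 hi).2.ne'
    · have key : ∀ (y : V → ℝ) (S T : Finset I), S.Nonempty → S ⊆ T → sdWeight (β y) T ≠ 0 →
          dist (avg c S) (avg c T) ≤ (N / (N + 1) : ℝ) ^ (n + 1) := by
        intro y S T hS hST hT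
        rw [pow_succ']
        have hTc : T.card ≤ N + 1 := by
          refine (hβcard y T (hact hT)).trans ((Finset.card_le_univ _).trans hN)
        have := avg_mem (c := c) (S := S)
          (C := Metric.closedBall (avg c T) (N / (N + 1) * (N / (N + 1) : ℝ) ^ n)) hS
          (convex_closedBall _ _) fun i hi => Metric.mem_closedBall.2 <|
            dist_avg_le hTc (fun i hi j hj => hmesh y i j (hact hT i hi) (hact hT j hj)) (hST hi)
        exact Metric.mem_closedBall.1 this
      intro y S T hS hT
      rcases subset_or_subset_of_sdWeight hS hT with h | h
      · exact key y _ _ S.2 h hT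
      · rw [dist_comm]
        exact key y _ _ T.2 h hS

end FineCover

section Approx

lemma exists_caratheodory_homog {I : Type*} {d : ℕ} {A : Finset I} {w : I → Fin d → ℝ}
    {z : Fin d → ℝ} (hz : z ∈ convexHull ℝ (w '' A)) :
    ∃ τ ⊆ A, τ.card ≤ d + 1 ∧ ∃ l : I → ℝ, ∀ j, ∑ i ∈ τ, l i * homog (w i) j = homog z j := by
  classical
  obtain ⟨_, i₀, -, -⟩ := convexHull_nonempty_iff.1 ⟨z, hz⟩
  have : Nonempty I := ⟨i₀⟩
  rw [convexHull_eq_union] at hz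
  simp only [Set.mem_iUnion] at hz
  obtain ⟨t, ht, hai, hzt⟩ := hz
  have hsec : ∀ e ∈ t, ∃ i ∈ A, w i = e := fun e he => ht he
  choose! k hkA hkw using hsec
  have hinj : Set.InjOn k t := fun e he e' he' h => by rw [← hkw e he, ← hkw e' he', h]
  rw [Finset.mem_convexHull'] at hzt
  obtain ⟨l, -, hl1, hlz⟩ := hzt
  refine ⟨t.image k, ?_, ?_, fun i => l (w i), fun j => ?_⟩
  · intro i hi
    obtain ⟨e, he, rfl⟩ := Finset.mem_image.1 hi
    exact hkA e he
  · have h1 := hai.card_le_finrank_succ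
    have h2 := Submodule.finrank_le (vectorSpan ℝ (Set.range ((↑) : t → Fin d → ℝ)))
    rw [Module.finrank_fin_fun] at h2
    rw [Fintype.card_coe] at h1
    exact Finset.card_image_le.trans (by omega)
  · rw [Finset.sum_image hinj]
    have h1 : ∑ e ∈ t, l (w (k e)) * homog (w (k e)) j = ∑ e ∈ t, l e * homog e j :=
      Finset.sum_congr rfl fun e he => by rw [hkw e he]
    rw [h1]
    cases j with
    | none => simpa [homog] using hl1
    | some j =>
      have := congrFun hlz j
      simpa [homog, Finset.sum_apply] using this

/-- The points of the simplex on `V` with at most `d + 1` nonzero coordinates. -/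
def skelSet (V : Type*) [Fintype V] (d : ℕ) : Set (V → ℝ) :=
  {x ∈ stdSimplex ℝ V | (Finset.univ.filter fun v => x v ≠ 0).card ≤ d + 1}

/-- The face of the simplex on `V` spanned by `S`. -/
def faceSet {V : Type*} [Fintype V] (S : Finset V) : Set (V → ℝ) :=
  {x ∈ stdSimplex ℝ V | ∀ v ∉ S, x v = 0}

lemma faceSet_subset_skelSet {V : Type*} [Fintype V] {d : ℕ} {S : Finset V} (hS : S.card ≤ d + 1) :
    faceSet S ⊆ skelSet V d := by
  refine fun x hx => ⟨hx.1, (Finset.card_le_card fun v hv => ?_).trans hS⟩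
  by_contra h
  exact (Finset.mem_filter.1 hv).2 (hx.2 v h)

theorem exists_approx_tverberg {V : Type} [Fintype V] {p r d n : ℕ} [Fact p.Prime]
    (hV : Fintype.card V = (d + 1) * (Fintype.card (Tor p r) - 1) + 1)
    (f : (V → ℝ) → Fin d → ℝ) {ε η : ℝ} (hε : 0 < ε)
    (hη : ∀ a ∈ skelSet V d, ∀ b ∈ skelSet V d,
      dist a b ≤ (Fintype.card V / (Fintype.card V + 1) : ℝ) ^ n → dist (f a) (f b) ≤ η) :
    ∃ S : Tor p r → Finset V, (∀ g, (S g).Nonempty) ∧ (∀ g, (S g).card ≤ d + 1) ∧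
      (∀ g g', g ≠ g' → Disjoint (S g) (S g')) ∧
      ∃ z, ∀ g, ∃ a ∈ faceSet (S g), dist z (f a) ≤ ε + η := by
  classical
  obtain ⟨I, _, c, β, hβ, hc, hβ0, hβex, hβc, hβcard, hmesh⟩ :=
    exists_fineCover V (N := Fintype.card V) (by omega) n
  obtain ⟨w, hw, hgen⟩ := exists_generic_near (G := Tor p r) (fun i => f (c i)) hε
  obtain ⟨φ, x, hx0, hx1, hx⟩ := exists_coloring_forall_colorPart_eq (p := p) (r := r)
    (fun (j : Option (Fin d)) y => ∑ i, β y i * homog (w i) j) (fun j => by fun_prop)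
    (by rw [Fintype.card_option, Fintype.card_fin]; exact hV.ge)
  set y := colorPart φ x with hy
  let S : Tor p r → Finset V := fun g => Finset.univ.filter fun v => 0 < y g v
  let A : Tor p r → Finset I := fun g => Finset.univ.filter fun i => β (y g) i ≠ 0
  have hSφ : ∀ {g v}, 0 < y g v → φ v = g := by
    intro g v h
    by_contra hne
    simp [hy, colorPart, hne] at h
  have hvert : ∀ i, ∃ v, c i v ≠ 0 := by
    intro i
    by_contra! h
    have := (hc i).2
    simp [h] at this
  choose vert hvert using hvert
  have hvy : ∀ {g i}, i ∈ A g → 0 < y g (vert i) := by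
    intro g i hi
    by_contra h
    exact hvert i (hβc _ i (Finset.mem_filter.1 hi).2 _ h)
  obtain ⟨v₀, hv₀⟩ : ∃ v, 0 < x v := by
    by_contra! h
    have : ∑ v, x v ≤ 0 := Finset.sum_nonpos fun v _ => h v
    linarith
  set s := ∑ i, β (y (φ v₀)) i with hs
  have hs0 : 0 < s := by
    obtain ⟨i, hi⟩ := hβex (y (φ v₀)) ⟨v₀, by simpa [hy, colorPart] using hv₀⟩
    exact Finset.sum_pos' (fun i _ => hβ0 _ i) ⟨i, Finset.mem_univ _, (hβ0 _ i).lt_of_ne' hi⟩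
  have hsg : ∀ g, ∑ i, β (y g) i = s := by
    intro g
    simpa [homog] using hx none g (φ v₀)
  have hAne : ∀ g, (A g).Nonempty := by
    intro g
    by_contra h
    rw [Finset.not_nonempty_iff_eq_empty, Finset.filter_eq_empty_iff] at h
    have := hsg g
    rw [Finset.sum_eq_zero fun i _ => not_not.1 (h (Finset.mem_univ i))] at this
    linarith
  have hSne : ∀ g, (S g).Nonempty := by
    intro g
    obtain ⟨i, hi⟩ := hAne g
    exact ⟨vert i, Finset.mem_filter.2 ⟨Finset.mem_univ _, hvy hi⟩⟩
  have hSdis : ∀ g g', g ≠ g' → Disjoint (S g) (S g') := by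
    intro g g' hne
    rw [Finset.disjoint_left]
    intro v hv hv'
    exact hne ((hSφ (Finset.mem_filter.1 hv).2).symm.trans (hSφ (Finset.mem_filter.1 hv').2))
  let z : Fin d → ℝ := fun j => s⁻¹ * ∑ i, β (y (φ v₀)) i * w i j
  have hz : ∀ g, z ∈ convexHull ℝ (w '' A g) := by
    intro g
    have h1 : z = ∑ i ∈ A g, (s⁻¹ * β (y g) i) • w i := by
      have h2 : ∑ i ∈ A g, (s⁻¹ * β (y g) i) • w i = ∑ i, (s⁻¹ * β (y g) i) • w i := by
        refine Finset.sum_subset (Finset.subset_univ _) fun i _ hi => ?_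
        have : β (y g) i = 0 := by simpa [A] using hi
        rw [this, mul_zero, zero_smul]
      rw [h2]
      funext j
      have h3 := hx (some j) (φ v₀) g
      simp only [homog, Option.elim] at h3
      change s⁻¹ * ∑ i, β (y (φ v₀)) i * w i j = _
      rw [h3]
      simp only [Finset.sum_apply, Pi.smul_apply, smul_eq_mul, Finset.mul_sum, mul_assoc]
    rw [h1]
    refine (convex_convexHull ℝ _).sum_mem (fun i _ => by have := hβ0 (y g) i; positivity) ?_
      fun i hi => subset_convexHull _ _ ⟨i, hi, rfl⟩
    rw [← Finset.mul_sum]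
    have h2 : ∑ i ∈ A g, β (y g) i = s := by
      rw [← hsg g]
      refine Finset.sum_subset (Finset.subset_univ _) fun i _ hi => ?_
      simpa [A] using hi
    rw [h2, inv_mul_cancel₀ hs0.ne']
  have hcar : ∀ g, ∃ τ ⊆ A g, τ.card ≤ d + 1 ∧
      ∃ l : I → ℝ, ∀ j, ∑ i ∈ τ, l i * homog (w i) j = homog z j :=
    fun g => exists_caratheodory_homog (hz g)
  choose τ hτA hτcard l hl using hcar
  let γ : I → Tor p r := fun i => φ (vert i)
  have hγτ : ∀ {g i}, i ∈ τ g → γ i = g := fun hi => hSφ (hvy (hτA _ hi))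
  let B : Finset I := Finset.univ.biUnion τ
  have hBτ : ∀ g, (B.filter fun i => γ i = g) = τ g := by
    intro g
    ext i
    simp only [B, Finset.mem_filter, Finset.mem_biUnion, Finset.mem_univ, true_and]
    refine ⟨?_, fun h => ⟨⟨g, h⟩, hγτ h⟩⟩
    rintro ⟨⟨g', hg'⟩, rfl⟩
    rwa [hγτ hg']
  have hBcard : Fintype.card V ≤ B.card := by
    by_contra! hlt
    have hli := hgen B γ (fun g => by rw [hBτ]; exact hτcard g) (by omega)
    rw [Fintype.linearIndependent_iff] at hli
    have hzero := hli (Sum.elim (fun a => l (γ a) a) fun j => - homog z j) ?_ (Sum.inr none)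
    · simp [homog] at hzero
    · funext ⟨g, j⟩
      rw [sum_flatVec, Pi.zero_apply]
      simp only [Sum.elim_inl, Sum.elim_inr]
      rw [add_neg_eq_zero, ← hl g j, ← hBτ g, Finset.sum_filter, ← Finset.sum_coe_sort B]
      refine Finset.sum_congr rfl fun a _ => ?_
      split_ifs with h
      · rw [h]
      · rfl
  have hτS : ∀ g, (τ g).card ≤ (S g).card := fun g =>
    hβcard (y g) (τ g) fun i hi => (Finset.mem_filter.1 (hτA g hi)).2
  have hsumS : ∑ g, (S g).card ≤ Fintype.card V := by
    rw [← Finset.card_biUnion fun g _ g' _ h => hSdis g g' h]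
    exact Finset.card_le_univ _
  have hsumτ : ∑ g, (τ g).card ≥ B.card := Finset.card_biUnion_le
  have heq : ∀ g, (τ g).card = (S g).card := by
    have h1 : ∑ g, (τ g).card = ∑ g, (S g).card :=
      le_antisymm (Finset.sum_le_sum fun g _ => hτS g) (hsumS.trans (hBcard.trans hsumτ))
    exact fun g => (Finset.sum_eq_sum_iff_of_le fun g _ => hτS g).1 h1 g (Finset.mem_univ _)
  have hScard : ∀ g, (S g).card ≤ d + 1 := fun g => heq g ▸ hτcard g
  have hface : ∀ {g i}, i ∈ A g → c i ∈ faceSet (S g) := by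
    refine fun {g i} hi => ⟨hc i, fun v hv => hβc (y g) i (Finset.mem_filter.1 hi).2 v fun h => ?_⟩
    exact hv (Finset.mem_filter.2 ⟨Finset.mem_univ _, h⟩)
  refine ⟨S, hSne, hScard, hSdis, z, fun g => ?_⟩
  obtain ⟨i₀, hi₀⟩ := hAne g
  refine ⟨c i₀, hface hi₀, ?_⟩
  rw [← Metric.mem_closedBall]
  refine convexHull_min ?_ (convex_closedBall _ _) (hz g)
  rintro _ ⟨i, hi, rfl⟩
  rw [Metric.mem_closedBall]
  refine (dist_triangle _ (f (c i)) _).trans (add_le_add ?_ ?_)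
  · exact (dist_le_pi_dist w (fun i => f (c i)) i).trans hw.le
  · exact hη _ (faceSet_subset_skelSet (hScard g) (hface hi)) _
      (faceSet_subset_skelSet (hScard g) (hface hi₀))
      (hmesh (y g) i i₀ (Finset.mem_filter.1 hi).2 (Finset.mem_filter.1 hi₀).2)

end Approx

section Limit

variable {V : Type*} [Fintype V]

lemma convex_faceSet (S : Finset V) : Convex ℝ (faceSet S) := by
  refine (convex_stdSimplex ℝ V).inter fun x hx y hy a b _ _ _ v hv => ?_
  simp [hx v hv, hy v hv]

lemma isCompact_faceSet (S : Finset V) : IsCompact (faceSet S) := by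
  refine (isCompact_stdSimplex ℝ V).inter_right ?_
  have : {x : V → ℝ | ∀ v ∉ S, x v = 0} = ⋂ v, ⋂ (_ : v ∉ S), {x | x v = 0} := by
    ext x
    simp
  change IsClosed {x : V → ℝ | ∀ v ∉ S, x v = 0}
  rw [this]
  exact isClosed_iInter fun v => isClosed_iInter fun _ =>
    isClosed_eq (continuous_apply v) continuous_const

lemma isCompact_skelSet (d : ℕ) : IsCompact (skelSet V d) := by
  have : skelSet V d = ⋃ S : {S : Finset V // S.card ≤ d + 1}, faceSet S.1 := by
    refine Set.Subset.antisymm (fun x hx => ?_) (Set.iUnion_subset fun S =>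
      faceSet_subset_skelSet S.2)
    refine Set.mem_iUnion.2 ⟨⟨_, hx.2⟩, hx.1, fun v hv => ?_⟩
    simpa using hv
  rw [this]
  exact isCompact_iUnion fun S => isCompact_faceSet S.1

theorem exists_tverberg_skelSet {V : Type} [Fintype V] {p r d : ℕ} [Fact p.Prime]
    (hV : Fintype.card V = (d + 1) * (Fintype.card (Tor p r) - 1) + 1)
    (f : (V → ℝ) → Fin d → ℝ) (hf : ContinuousOn f (skelSet V d)) :
    ∃ S : Tor p r → Finset V, (∀ g, (S g).Nonempty) ∧ (∀ g, (S g).card ≤ d + 1) ∧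
      (∀ g g', g ≠ g' → Disjoint (S g) (S g')) ∧
      ∃ z, ∀ g, ∃ a ∈ faceSet (S g), f a = z := by
  classical
  by_contra hcon
  let Q := {S : Tor p r → Finset V // (∀ g, (S g).Nonempty) ∧ (∀ g, (S g).card ≤ d + 1) ∧
      ∀ g g', g ≠ g' → Disjoint (S g) (S g')}
  have hgap : ∀ S : Q, ∃ m : ℝ, 0 < m ∧
      ∀ a ∈ Set.pi Set.univ (fun g => faceSet (S.1 g)), m ≤ ∑ g, dist (f (a g)) (f (a 0)) := by
    intro S
    refine (isCompact_univ_pi fun g => isCompact_faceSet (S.1 g)).exists_forall_le' ?_ ?_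
    · have h1 : ∀ g, ContinuousOn (fun a : Tor p r → V → ℝ => f (a g))
          (Set.pi Set.univ (fun g => faceSet (S.1 g))) := fun g =>
        (hf.mono (faceSet_subset_skelSet (S.2.2.1 g))).comp (continuous_apply g).continuousOn
          fun a ha => ha g (Set.mem_univ _)
      exact continuousOn_finsetSum _ fun g _ => continuous_dist.comp_continuousOn
        ((h1 g).prodMk (h1 0))
    · intro a ha
      refine (Finset.sum_nonneg fun g _ => dist_nonneg).lt_of_ne' fun h0 => ?_
      rw [Finset.sum_eq_zero_iff_of_nonneg fun g _ => dist_nonneg] at h0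
      exact hcon ⟨S.1, S.2.1, S.2.2.1, S.2.2.2, f (a 0), fun g =>
        ⟨a g, ha g (Set.mem_univ _), dist_eq_zero.1 (h0 g (Finset.mem_univ _))⟩⟩
  choose m hm0 hm using hgap
  obtain ⟨q, hq⟩ : ∃ q : ℝ, q = (Fintype.card (Tor p r) : ℕ) := ⟨_, rfl⟩
  have hq0 : 0 < q := by
    rw [hq]
    exact_mod_cast Fintype.card_pos
  obtain ⟨ε, hεm, hε⟩ : ∃ ε : ℝ, (∀ S : Q, ε < m S / (4 * q)) ∧ 0 < ε := by
    have h1 : ∀ᶠ ε : ℝ in nhdsWithin 0 (Set.Ioi 0), ∀ S : Q, ε < m S / (4 * q) := by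
      refine Filter.eventually_all.2 fun S => ?_
      have : 0 < m S / (4 * q) := by have := hm0 S; positivity
      exact eventually_nhdsWithin_of_eventually_nhds (eventually_lt_nhds this)
    exact (h1.and self_mem_nhdsWithin).exists
  obtain ⟨δ, hδ, huc⟩ := Metric.uniformContinuousOn_iff.1
    ((isCompact_skelSet d).uniformContinuousOn_of_continuous hf) ε hε
  obtain ⟨n, hn⟩ := exists_pow_lt_of_lt_one hδ
    (y := (Fintype.card V / (Fintype.card V + 1) : ℝ)) (by
      rw [div_lt_one (by positivity)]
      linarith)
  obtain ⟨S, h1, h2, h3, z, hz⟩ := exists_approx_tverberg (n := n) hV f hε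
    fun a ha b hb hab => (huc a ha b hb (hab.trans_lt hn)).le
  choose a ha haz using hz
  have h4 := hm ⟨S, h1, h2, h3⟩ a fun g _ => ha g
  have h5 : ∑ g, dist (f (a g)) (f (a 0)) ≤ ∑ _g : Tor p r, 4 * ε := by
    refine Finset.sum_le_sum fun g _ => ?_
    have := dist_triangle_left (f (a g)) (f (a 0)) z
    linarith [haz g, haz 0]
  have h6 := hεm ⟨S, h1, h2, h3⟩
  rw [lt_div_iff₀ (by positivity)] at h6
  rw [Finset.sum_const, nsmul_eq_mul, Finset.card_univ, ← hq] at h5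
  linarith

end Limit

lemma skelSet_eq_skel (N k : ℕ) : skelSet (Fin (N + 1)) k = skel N k := by
  ext x
  have : {i | x i ≠ 0}.ncard = (Finset.univ.filter fun i => x i ≠ 0).card := by
    rw [Set.ncard_eq_toFinset_card']
    congr 1
    ext i
    simp
  change (_ ∧ _) ↔ (_ ∧ _)
  rw [this]
  rfl

lemma isTverbergPartition_image {G : Type*} [Fintype G] {N d q : ℕ}
    {f : (Fin (N + 1) → ℝ) → Euc d} (hG : Fintype.card G = q) {S : G → Finset (Fin (N + 1))}
    (hne : ∀ g, (S g).Nonempty) (hdis : ∀ g g', g ≠ g' → Disjoint (S g) (S g')) {z : Euc d}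
    (hz : ∀ g, ∃ a ∈ faceSet (S g), f a = z) :
    IsTverbergPartition q f (Finset.univ.image S) := by
  classical
  have hinj : Function.Injective S := by
    intro g g' h
    by_contra hgg
    have := hdis g g' hgg
    rw [← h, disjoint_self] at this
    exact (hne g).ne_empty this
  refine ⟨?_, ?_, ?_, z, ?_⟩
  · rw [Finset.card_image_of_injective _ hinj, Finset.card_univ, hG]
  · simpa using hne
  · simp only [Finset.mem_image, Finset.mem_univ, true_and]
    rintro _ ⟨g, rfl⟩ _ ⟨g', rfl⟩ h
    exact hdis g g' fun hgg => h (by rw [hgg])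
  · simp only [Finset.mem_image, Finset.mem_univ, true_and, Set.mem_iInter]
    rintro _ ⟨g, rfl⟩
    exact hz g

theorem exists_tverberg_dim_one (m : ℕ) (f : (Fin (2 * m + 1) → ℝ) → Euc 1)
    (hf : ContinuousOn f (skel (2 * m) 1)) :
    ∃ S : Fin (m + 1) → Finset (Fin (2 * m + 1)), (∀ g, (S g).Nonempty) ∧
      (∀ g, (S g).card ≤ 2) ∧ (∀ g g', g ≠ g' → Disjoint (S g) (S g')) ∧
      ∃ z, ∀ g, ∃ a ∈ faceSet (S g), f a = z := by
  classical
  rw [← skelSet_eq_skel] at hf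
  let F : Fin (2 * m + 1) → ℝ := fun v => f (Pi.single v 1) 0
  let σ := Tuple.sort F
  have hmono : Monotone (F ∘ σ) := Tuple.monotone_sort F
  let lo : Fin (m + 1) → Fin (2 * m + 1) := fun k => ⟨k, by omega⟩
  let hi : Fin (m + 1) → Fin (2 * m + 1) := fun k => ⟨2 * m - k, by omega⟩
  refine ⟨fun k => {σ (lo k), σ (hi k)}, fun k => ⟨_, Finset.mem_insert_self _ _⟩,
    fun k => Finset.card_le_two, ?_, f (Pi.single (σ (lo (Fin.last m))) 1), ?_⟩
  · intro k k' hkk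
    have hne : (k : ℕ) ≠ k' := fun h => hkk (Fin.ext h)
    have hk := k.2
    have hk' := k'.2
    simp only [Finset.disjoint_left, Finset.mem_insert, Finset.mem_singleton]
    rintro v (rfl | rfl) (h | h) <;>
    · have := congrArg Fin.val (σ.injective h)
      simp only [lo, hi] at this
      omega
  · intro k
    set S : Finset (Fin (2 * m + 1)) := {σ (lo k), σ (hi k)} with hS
    have hvert : ∀ v ∈ S, Pi.single v 1 ∈ faceSet S := fun v hv =>
      ⟨single_mem_stdSimplex ℝ v, fun u hu => Pi.single_eq_of_ne (by rintro rfl; exact hu hv) _⟩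
    have hcont : ContinuousOn (fun x => f x 0) (faceSet S) :=
      ((PiLp.continuous_apply 2 (fun _ : Fin 1 => ℝ) 0).comp_continuousOn
        (hf.mono (faceSet_subset_skelSet Finset.card_le_two)))
    have hk := k.2
    obtain ⟨a, ha, hfa⟩ := (convex_faceSet S).isPreconnected.intermediate_value
      (hvert _ (Finset.mem_insert_self _ _))
      (hvert _ (Finset.mem_insert_of_mem (Finset.mem_singleton_self _))) hcont
      (⟨hmono (a := lo k) (b := lo (Fin.last m)) (by simp only [lo, Fin.le_def, Fin.val_last]; omega),
        hmono (a := lo (Fin.last m)) (b := hi k)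
          (by simp only [lo, hi, Fin.le_def, Fin.val_last]; omega)⟩ :
        F (σ (lo (Fin.last m))) ∈ Set.Icc (F (σ (lo k))) (F (σ (hi k))))
    refine ⟨a, ha, ?_⟩
    ext i
    rw [Subsingleton.elim i 0]
    exact hfa

/-- The `d`-Skeleton Conjecture holds (a) for `d = 1` and all `q ≥ 1`, and
(b) for all `d ≥ 1` whenever `q` is a prime power. -/
theorem dSkeleton_cases :
    (∀ q : ℕ, 1 ≤ q →
      ∀ f : (Fin (2*(q-1)+1) → ℝ) → Euc 1,
        ContinuousOn f (skel (2*(q-1)) 1) →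
        ∃ P : Finset (Finset (Fin (2*(q-1)+1))),
          IsTverbergPartition q f P ∧ ∀ S ∈ P, S.card ≤ 2) ∧
    (∀ q : ℕ, IsPrimePow q → ∀ d : ℕ, 1 ≤ d →
      ∀ f : (Fin ((d+1)*(q-1)+1) → ℝ) → Euc d,
        ContinuousOn f (skel ((d+1)*(q-1)) d) →
        ∃ P : Finset (Finset (Fin ((d+1)*(q-1)+1))),
          IsTverbergPartition q f P ∧ ∀ S ∈ P, S.card ≤ d + 1) := by
  constructor
  · intro q hq f hf
    obtain ⟨S, hne, hcard, hdis, z, hz⟩ := exists_tverberg_dim_one (q - 1) f hf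
    refine ⟨Finset.univ.image S, isTverbergPartition_image ?_ hne hdis hz, by simpa using hcard⟩
    rw [Fintype.card_fin]
    omega
  · intro q hq d _ f hf
    obtain ⟨p, k, hp, -, rfl⟩ := (isPrimePow_nat_iff q).1 hq
    have : Fact p.Prime := ⟨hp⟩
    have hTor : Fintype.card (Tor p k) = p ^ k := by simp [Tor, ZMod.card]
    rw [← skelSet_eq_skel] at hf
    obtain ⟨S, hne, hcard, hdis, z, hz⟩ := exists_tverberg_skelSet (p := p) (r := k) (d := d)
      (V := Fin ((d + 1) * (p ^ k - 1) + 1)) (by rw [hTor, Fintype.card_fin])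
      (fun x => (f x).ofLp) ((PiLp.continuous_ofLp 2 _).comp_continuousOn hf)
    refine ⟨Finset.univ.image S, isTverbergPartition_image hTor hne hdis (z := WithLp.toLp 2 z)
      fun g => ?_, by simpa using hcard⟩
    obtain ⟨a, ha, hfa⟩ := hz g
    exact ⟨a, ha, by rw [← hfa]⟩
end
end

section
/- Let d, q ≥ 1. (a) For every continuous map F : Δ^{(d+1)(q-1)} → ℝ^d, every Tverberg partition of the restriction of F to the d-skeleton Δ_d^{(d+1)(q-1)} is also a Tverberg partition of F. (b) For every continuous map f : Δ_d^{(d+1)(q-1)} → ℝ^d and every ε > 0 there exists a continuous map F : Δ^{(d+1)(q-1)} → ℝ^d with sup_{x ∈ Δ_d^{(d+1)(q-1)}} ‖F(x) − f(x)‖ < ε such that every Tverberg partition {S_1, …, S_q} of F satisfies |S_i| ≤ d+1 for all i and is a Tverberg partition of f. -/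
open scoped BigOperators

noncomputable section

open Set Metric Module

section GenericPerturbation

variable {ι κ V : Type*} [Fintype ι] [DecidableEq ι] [NormedAddCommGroup V] [NormedSpace ℝ V]

/-- The linear perturbations `a` for which `x ↦ g x + ∑ i, x i • a i` takes a common value at points
of the faces spanned by the sets `S k`, the `j k`-th coordinate of the `k`-th point being positive. -/
def coincidenceSet (g : (ι → ℝ) → V) (S : κ → Finset ι) (j : κ → ι) : Set (ι → V) :=
  {a | ∃ x : κ → ι → ℝ, ∃ y, ∀ k, (∀ i ∉ S k, x k i = 0) ∧ ∑ i, x k i = 1 ∧ 0 < x k (j k) ∧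
    g (x k) + ∑ i, x k i • a i = y}

/-- The point of the affine hull of the face `S k` whose coordinates away from `j k` are given. -/
def facePoint (S : κ → Finset ι) (j : κ → ι)
    (u : (Σ k, {i // i ∈ S k ∧ i ≠ j k}) → ℝ) (k : κ) (i : ι) : ℝ :=
  if h : i ∈ S k ∧ i ≠ j k then u ⟨k, i, h⟩
  else if i = j k then 1 - ∑ i' : {i // i ∈ S k ∧ i ≠ j k}, u ⟨k, i'⟩ else 0

lemma facePoint_self (S : κ → Finset ι) (j : κ → ι)
    (u : (Σ k, {i // i ∈ S k ∧ i ≠ j k}) → ℝ) (k : κ) :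
    facePoint S j u k (j k) = 1 - ∑ i' : {i // i ∈ S k ∧ i ≠ j k}, u ⟨k, i'⟩ := by
  simp [facePoint]

lemma facePoint_restrict {S : κ → Finset ι} {j : κ → ι} {x : κ → ι → ℝ}
    (hx : ∀ k, ∀ i ∉ S k, x k i = 0) (hs : ∀ k, ∑ i, x k i = 1) :
    facePoint S j (fun p => x p.1 p.2) = x := by
  funext k i
  by_cases h : i ∈ S k ∧ i ≠ j k
  · simp [facePoint, h]
  · by_cases hi : i = j k
    · subst hi
      rw [facePoint_self, ← hs k, sub_eq_iff_eq_add,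
        ← Finset.add_sum_erase _ _ (Finset.mem_univ (j k))]
      congr 1
      rw [← Finset.sum_subtype ((S k).erase (j k)) (by simp [and_comm]) (x k)]
      refine (Finset.sum_subset (Finset.erase_subset_erase _ (Finset.subset_univ _)) ?_).symm
      intro i hi hi'
      exact hx k i fun h' => hi' (Finset.mem_erase.2 ⟨Finset.ne_of_mem_erase hi, h'⟩)
    · have : i ∉ S k := fun h' => h ⟨h', hi⟩
      simp [facePoint, hi, this, hx]

lemma convex_facePoint_pos (S : κ → Finset ι) (j : κ → ι) (W : Type*) [AddCommGroup W]
    [Module ℝ W] :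
    Convex ℝ {p : ((Σ k, {i // i ∈ S k ∧ i ≠ j k}) → ℝ) × W |
      ∀ k, 0 < facePoint S j p.1 k (j k)} := by
  simp only [facePoint_self, sub_pos, ofPred_forall]
  refine convex_iInter fun k => convex_halfSpace_lt ⟨fun p q => ?_, fun c p => ?_⟩ 1
  · simp [Finset.sum_add_distrib]
  · simp [Finset.mul_sum]

variable [Fintype κ]

lemma contDiff_facePoint (S : κ → Finset ι) (j : κ → ι) (k : κ) :
    ContDiff ℝ 1 (fun u => facePoint S j u k) := by
  rw [contDiff_pi]
  intro i
  unfold facePoint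
  split_ifs <;> fun_prop

/-- Solves the coincidence equations for the values of the perturbation at the vertices `j k`. -/
def coincidenceParam (g : (ι → ℝ) → V) (S : κ → Finset ι) (j : κ → ι)
    (p : ((Σ k, {i // i ∈ S k ∧ i ≠ j k}) → ℝ) × V × ({i // i ∉ range j} → V)) : ι → V :=
  let b : ι → V := fun i => if h : i ∉ range j then p.2.2 ⟨i, h⟩ else 0
  Function.extend j (fun k => (facePoint S j p.1 k (j k))⁻¹ •
    (p.2.1 - g (facePoint S j p.1 k) - ∑ i, facePoint S j p.1 k i • b i)) b

lemma contDiffOn_coincidenceParam {g : (ι → ℝ) → V} (hg : ContDiff ℝ 1 g) (S : κ → Finset ι)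
    {j : κ → ι} (hj : Function.Injective j) :
    ContDiffOn ℝ 1 (coincidenceParam g S j) {p | ∀ k, 0 < facePoint S j p.1 k (j k)} := by
  have hb (i : ι) : ContDiff ℝ 1
      fun p : ((Σ k, {i // i ∈ S k ∧ i ≠ j k}) → ℝ) × V × ({i // i ∉ range j} → V) =>
        if h : i ∉ range j then p.2.2 ⟨i, h⟩ else 0 := by
    split_ifs
    · fun_prop
    · fun_prop
  have hX (k : κ) : ContDiff ℝ 1
      fun p : ((Σ k, {i // i ∈ S k ∧ i ≠ j k}) → ℝ) × V × ({i // i ∉ range j} → V) =>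
        facePoint S j p.1 k := (contDiff_facePoint S j k).comp contDiff_fst
  have hXi (k : κ) (i : ι) := contDiff_pi.1 (hX k) i
  rw [contDiffOn_pi]
  intro i
  by_cases hi : i ∈ range j
  · obtain ⟨k, rfl⟩ := hi
    simp only [coincidenceParam, hj.extend_apply]
    refine ContDiffOn.smul ((hXi k (j k)).contDiffOn.inv fun p hp => (hp k).ne') ?_
    refine ContDiff.contDiffOn ?_
    refine (ContDiff.sub (by fun_prop) (hg.comp (hX k))).sub ?_
    exact ContDiff.sum fun i _ => (hXi k i).smul (hb i)
  · simp only [coincidenceParam, Function.extend_apply' _ _ _ hi]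
    exact (hb i).contDiffOn

lemma coincidenceSet_subset_image {g : (ι → ℝ) → V} {S : κ → Finset ι} {j : κ → ι}
    (hS : Pairwise fun k l => Disjoint (S k) (S l)) (hj : ∀ k, j k ∈ S k)
    (hinj : Function.Injective j) :
    coincidenceSet g S j ⊆
      coincidenceParam g S j '' {p | ∀ k, 0 < facePoint S j p.1 k (j k)} := by
  rintro a ⟨x, y, h⟩
  have hX := facePoint_restrict (j := j) (fun k => (h k).1) (fun k => (h k).2.1)
  refine ⟨⟨fun p => x p.1 p.2, y, fun i => a i⟩, fun k => ?_, ?_⟩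
  · simpa only [hX] using (h k).2.2.1
  · funext i
    by_cases hi : i ∈ range j
    · obtain ⟨k, rfl⟩ := hi
      simp only [coincidenceParam, hinj.extend_apply, hX]
      obtain ⟨h0, -, hpos, hy⟩ := h k
      rw [inv_smul_eq_iff₀ hpos.ne', ← hy, add_sub_cancel_left, ← Finset.sum_sub_distrib]
      rw [Finset.sum_eq_single (j k)]
      · simp
      · intro i _ hik
        by_cases hi : i ∈ range j
        · obtain ⟨l, rfl⟩ := hi
          have hkl : k ≠ l := fun e => hik (e ▸ rfl)
          simp [h0 _ fun hm => Finset.disjoint_left.1 (hS hkl) hm (hj l)]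
        · simp only [hi, not_false_eq_true, dite_true, sub_self]
      · simp
    · simp only [coincidenceParam, Function.extend_apply' _ _ _ hi]
      simp only [hi, not_false_eq_true, dite_true]

/-- The coincidence set has positive codimension if the total number of vertices of the faces is
at most `(dim V + 1) (|κ| - 1)`. -/
theorem dimH_coincidenceSet_le [FiniteDimensional ℝ V] {g : (ι → ℝ) → V} (hg : ContDiff ℝ 1 g)
    {S : κ → Finset ι} {j : κ → ι}
    (hS : Pairwise fun k l => Disjoint (S k) (S l)) (hj : ∀ k, j k ∈ S k)
    (hcard : ∑ k, (S k).card + finrank ℝ V < (finrank ℝ V + 1) * Fintype.card κ) :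
    dimH (coincidenceSet g S j) ≤ (finrank ℝ (ι → V) - 1 : ℕ) := by
  have hinj : Function.Injective j := fun k l hkl => by
    by_contra hne
    exact Finset.disjoint_left.1 (hS hne) (hj k) (hkl ▸ hj l)
  have hle := Fintype.card_le_of_injective j hinj
  have hsum : ∑ k, (S k).card =
      Fintype.card (Σ k, {i // i ∈ S k ∧ i ≠ j k}) + Fintype.card κ := by
    rw [Fintype.card_sigma, Fintype.card_eq_sum_ones, ← Finset.sum_add_distrib]
    refine Finset.sum_congr rfl fun k _ => ?_
    rw [← Finset.card_erase_add_one (hj k)]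
    congr 1
    rw [Fintype.card_subtype]
    congr 1
    ext i
    simp [and_comm]
  have hcompl : Fintype.card {i // i ∉ range j} + Fintype.card κ = Fintype.card ι := by
    have h1 := Fintype.card_subtype_compl (fun i => i ∈ range j)
    have h2 : Fintype.card {i // i ∈ range j} = Fintype.card κ := Set.card_range_of_injective hinj
    omega
  calc dimH (coincidenceSet g S j)
      ≤ dimH (coincidenceParam g S j '' {p | ∀ k, 0 < facePoint S j p.1 k (j k)}) :=
        dimH_mono (coincidenceSet_subset_image hS hj hinj)
    _ ≤ dimH {p : ((Σ k, {i // i ∈ S k ∧ i ≠ j k}) → ℝ) × V × ({i // i ∉ range j} → V) |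
          ∀ k, 0 < facePoint S j p.1 k (j k)} :=
        (contDiffOn_coincidenceParam hg S hinj).dimH_image_le (convex_facePoint_pos S j _) le_rfl
    _ ≤ finrank ℝ (((Σ k, {i // i ∈ S k ∧ i ≠ j k}) → ℝ) × V × ({i // i ∉ range j} → V)) :=
        (dimH_mono (subset_univ _)).trans_eq (Real.dimH_univ_eq_finrank _)
    _ ≤ (finrank ℝ (ι → V) - 1 : ℕ) := by
        norm_cast
        simp only [finrank_prod, finrank_pi, finrank_pi_fintype, Finset.sum_const,
          Finset.card_univ, smul_eq_mul]
        refine Nat.le_sub_one_of_lt ?_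
        rw [← hcompl]
        nlinarith

end GenericPerturbation

lemma isCompact_stdSimp (N : ℕ) : IsCompact (stdSimp N) :=
  isCompact_stdSimplex ℝ (Fin (N + 1))

lemma isCompact_simpFace {N : ℕ} (S : Finset (Fin (N + 1))) : IsCompact (simpFace S) := by
  have h : simpFace S = stdSimp N ∩ ⋂ i ∉ S, {x | x i = 0} := by
    ext x
    simp [simpFace]
  rw [h]
  exact (isCompact_stdSimp N).inter_right <| isClosed_biInter fun i _ =>
    isClosed_eq (continuous_apply i) continuous_const

lemma simpFace_subset_skel {N k : ℕ} {S : Finset (Fin (N + 1))} (hS : S.card ≤ k + 1) :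
    simpFace S ⊆ skel N k := fun x hx => by
  refine ⟨hx.1, le_trans ?_ hS⟩
  rw [← ncard_coe_finset]
  exact ncard_le_ncard (fun i hi => by_contra fun h => hi (hx.2 i h)) S.finite_toSet

lemma isClosed_skel (N k : ℕ) : IsClosed (skel N k) := by
  have h : skel N k = ⋃ S ∈ {S : Finset (Fin (N + 1)) | S.card ≤ k + 1}, simpFace S := by
    refine Subset.antisymm (fun x hx => ?_) (iUnion₂_subset fun S hS => simpFace_subset_skel hS)
    refine mem_iUnion₂.2 ⟨(toFinite {i | x i ≠ 0}).toFinset, ?_, hx.1, by simp⟩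
    rw [mem_ofPred_eq, ← ncard_eq_toFinset_card]
    exact hx.2
  rw [h]
  exact (toFinite _).isClosed_biUnion fun S _ => (isCompact_simpFace S).isClosed

/-- If the images of finitely many compact sets under a continuous map have no common point, then
neither do their images under uniformly close maps. -/
theorem exists_pos_forall_iInter_image_eq_empty {X Y κ : Type*} [TopologicalSpace X]
    [PseudoMetricSpace Y] [T2Space Y] [Finite κ] [Nonempty κ] {K : κ → Set X}
    (hK : ∀ k, IsCompact (K k)) {h : X → Y} (hh : Continuous h) (hempty : ⋂ k, h '' K k = ∅) :
    ∃ δ > 0, ∀ F : X → Y, (∀ k, ∀ x ∈ K k, dist (F x) (h x) < δ) → ⋂ k, F '' K k = ∅ := by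
  have := Fintype.ofFinite κ
  have hdisj : Disjoint ((fun x : κ → X => fun k => h (x k)) '' univ.pi K)
      {v | ∀ k l, v k = v l} := by
    rw [Set.disjoint_left]
    rintro _ ⟨x, hx, rfl⟩ hv
    have k₀ := Classical.arbitrary κ
    exact notMem_empty (h (x k₀)) <| hempty ▸
      mem_iInter.2 fun k => ⟨x k, hx k (mem_univ k), hv k k₀⟩
  have hclosed : IsClosed {v : κ → Y | ∀ k l, v k = v l} := by
    simp only [ofPred_forall]
    exact isClosed_iInter fun k => isClosed_iInter fun l =>
      isClosed_eq (continuous_apply k) (continuous_apply l)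
  obtain ⟨δ, hδ, hd⟩ := hdisj.exists_thickenings
    ((isCompact_univ_pi hK).image (by fun_prop)) hclosed
  refine ⟨δ, hδ, fun F hF => eq_empty_of_forall_notMem fun y hy => ?_⟩
  choose x hxK hxy using mem_iInter.1 hy
  refine Set.disjoint_left.1 hd (?_ : (fun k => F (x k)) ∈ _) ?_
  · exact mem_thickening_iff.2 ⟨_, mem_image_of_mem _ fun k _ => hxK k,
      (dist_pi_lt_iff hδ).2 fun k => hF k _ (hxK k)⟩
  · exact self_subset_thickening hδ _ fun k l => (hxy k).trans (hxy l).symm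

/-- A `C¹` map becomes generic on faces after an arbitrarily small linear perturbation: faces with
too few vertices in total have images without a common point. -/
theorem exists_small_generic_perturbation {N d : ℕ} (hd : 1 ≤ d)
    {g : (Fin (N + 1) → ℝ) → Euc d} (hg : ContDiff ℝ 1 g) {δ : ℝ} (hδ : 0 < δ) :
    ∃ a : Fin (N + 1) → Euc d, ‖a‖ < δ ∧ ∀ Q : Finset (Finset (Fin (N + 1))),
      (∀ S ∈ Q, ∀ T ∈ Q, S ≠ T → Disjoint S T) → ∑ S ∈ Q, S.card + d < (d + 1) * Q.card →
      ⋂ S ∈ Q, (fun x => g x + ∑ i, x i • a i) '' simpFace S = ∅ := by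
  let I := {p : Σ Q : Finset (Finset (Fin (N + 1))), Q → Fin (N + 1) //
    (∀ S ∈ p.1, ∀ T ∈ p.1, S ≠ T → Disjoint S T) ∧
    ∑ S ∈ p.1, S.card + d < (d + 1) * p.1.card ∧ ∀ S, p.2 S ∈ S.1}
  let B : Set (Fin (N + 1) → Euc d) := ⋃ p : I, coincidenceSet g (fun S => S.1) p.1.2
  have hB : dimH B < finrank ℝ (Fin (N + 1) → Euc d) := by
    have hle : dimH B ≤ (finrank ℝ (Fin (N + 1) → Euc d) - 1 : ℕ) := by
      rw [dimH_iUnion]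
      refine iSup_le fun ⟨p, hdisj, hcard, hp⟩ => dimH_coincidenceSet_le hg ?_ hp ?_
      · exact fun S T hST => hdisj S S.2 T T.2 fun h => hST (Subtype.ext h)
      · rw [Finset.sum_coe_sort p.1 Finset.card, finrank_euclideanSpace_fin, Fintype.card_coe]
        exact hcard
    refine hle.trans_lt ?_
    have : 0 < finrank ℝ (Fin (N + 1) → Euc d) := by
      simp only [finrank_pi_fintype, finrank_euclideanSpace_fin, Finset.sum_const,
        Finset.card_univ, Fintype.card_fin, smul_eq_mul]
      positivity
    exact_mod_cast Nat.sub_one_lt_of_lt this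
  obtain ⟨a, haB, ha⟩ := (dense_compl_of_dimH_lt_finrank hB).exists_dist_lt 0 hδ
  refine ⟨a, by simpa using ha, fun Q hdisj hcard => eq_empty_of_forall_notMem fun y hy => haB ?_⟩
  have hy' (S : Q) : y ∈ (fun x => g x + ∑ i, x i • a i) '' simpFace S.1 :=
    mem_iInter₂.1 hy S.1 S.2
  choose x hx hxy using hy'
  have hpos (S : Q) : ∃ i, 0 < x S i := by
    by_contra! h
    have : ∑ i, x S i ≤ 0 := Finset.sum_nonpos fun i _ => h i
    linarith [(hx S).1.2]
  choose j hj using hpos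
  refine mem_iUnion.2 ⟨⟨⟨Q, j⟩, hdisj, hcard, fun S => ?_⟩, x, y, fun S => ?_⟩
  · exact by_contra fun h => (hj S).ne' ((hx S).2 _ h)
  · exact ⟨(hx S).2, (hx S).1.2, hj S, hxy S⟩

lemma sum_card_filter_add_lt {N d q : ℕ} (hq : 1 ≤ q) (hN : N = (d + 1) * (q - 1))
    {P : Finset (Finset (Fin (N + 1)))} (hP : P.card = q)
    (hdisj : ∀ S ∈ P, ∀ T ∈ P, S ≠ T → Disjoint S T) {T : Finset (Fin (N + 1))} (hT : T ∈ P)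
    (hTcard : d + 1 < T.card) :
    ∑ S ∈ P with S.card ≤ d + 1, S.card + d < (d + 1) * (P.filter (·.card ≤ d + 1)).card := by
  have htotal : ∑ S ∈ P, S.card ≤ N + 1 := by
    rw [← Finset.card_biUnion hdisj]
    simpa using Finset.card_le_univ (P.biUnion fun S => S)
  have hsplit := Finset.sum_filter_add_sum_filter_not P (·.card ≤ d + 1) Finset.card
  have hsplit' := Finset.card_filter_add_card_filter_not (s := P) (·.card ≤ d + 1)
  have hbig : (P.filter (¬ ·.card ≤ d + 1)).card * (d + 2) ≤
      ∑ S ∈ P with ¬ S.card ≤ d + 1, S.card := by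
    rw [← smul_eq_mul]
    refine Finset.card_nsmul_le_sum _ _ _ fun S hS => ?_
    have := (Finset.mem_filter.1 hS).2
    omega
  have hne : 0 < (P.filter (¬ ·.card ≤ d + 1)).card :=
    Finset.card_pos.2 ⟨T, Finset.mem_filter.2 ⟨hT, by omega⟩⟩
  obtain ⟨r, rfl⟩ : ∃ r, q = r + 1 := ⟨q - 1, by omega⟩
  simp only [Nat.add_sub_cancel] at hN
  nlinarith

/-- A Tverberg partition of a sufficiently close map consisting of faces of the `k`-skeleton is one
of the original map. -/
theorem exists_pos_isTverbergPartition_of_close {N d k q : ℕ} (hq : 1 ≤ q)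
    {f : (Fin (N + 1) → ℝ) → Euc d} (h : C(Fin (N + 1) → ℝ, Euc d)) (hf : EqOn h f (skel N k)) :
    ∃ δ > 0, ∀ F : (Fin (N + 1) → ℝ) → Euc d, (∀ x ∈ skel N k, dist (F x) (h x) < δ) →
      ∀ P, (∀ S ∈ P, S.card ≤ k + 1) → IsTverbergPartition q F P → IsTverbergPartition q f P := by
  have hP (P : Finset (Finset (Fin (N + 1)))) : ∃ δ > 0, ∀ F : (Fin (N + 1) → ℝ) → Euc d,
      (∀ x ∈ skel N k, dist (F x) (h x) < δ) →
      (∀ S ∈ P, S.card ≤ k + 1) → IsTverbergPartition q F P → IsTverbergPartition q f P := by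
    by_cases hne : (⋂ S ∈ P, f '' simpFace S).Nonempty
    · exact ⟨1, one_pos, fun F _ _ hFP => ⟨hFP.1, hFP.2.1, hFP.2.2.1, hne⟩⟩
    by_cases hcard : P.card = q ∧ ∀ S ∈ P, S.card ≤ k + 1
    swap
    · exact ⟨1, one_pos, fun F _ hk hFP => absurd ⟨hFP.1, hk⟩ hcard⟩
    obtain ⟨hPq, hPk⟩ := hcard
    have hsub (G : (Fin (N + 1) → ℝ) → Euc d) :
        ⋂ S : P, G '' simpFace S.1 = ⋂ S ∈ P, G '' simpFace S :=
      iInter_subtype (· ∈ P) fun S => G '' simpFace S.1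
    have : Nonempty P := (Finset.card_pos.1 (by omega)).to_subtype
    obtain ⟨δ, hδ, hclose⟩ := exists_pos_forall_iInter_image_eq_empty
      (fun S : P => isCompact_simpFace S.1) h.continuous (by
        rw [← not_nonempty_iff_eq_empty]
        refine fun hne' => hne ?_
        rw [hsub] at hne'
        convert hne' using 4 with S hS
        exact image_congr fun x hx => (hf (simpFace_subset_skel (hPk S hS) hx)).symm)
    refine ⟨δ, hδ, fun F hF _ hFP => absurd hFP.2.2.2 ?_⟩
    have := hclose F fun S x hx => hF x (simpFace_subset_skel (hPk S S.2) hx)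
    rwa [hsub, ← not_nonempty_iff_eq_empty] at this
  choose δ hδ hclose using hP
  obtain ⟨P₀, hP₀⟩ := Finite.exists_min δ
  exact ⟨δ P₀, hδ P₀, fun F hF P => hclose P F fun x hx => (hF x hx).trans_le (hP₀ P)⟩

lemma exists_contDiff_approx_on_compact {E V : Type*} [NormedAddCommGroup E] [NormedSpace ℝ E]
    [FiniteDimensional ℝ E] [NormedAddCommGroup V] [NormedSpace ℝ V] [CompleteSpace V]
    (h : C(E, V)) {K : Set E} (hK : IsCompact K) {δ : ℝ} (hδ : 0 < δ) :
    ∃ g : E → V, ContDiff ℝ 1 g ∧ ∀ x ∈ K, dist (g x) (h x) < δ := by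
  obtain ⟨g, hg, hgK⟩ := (mem_closure_iff_nhds_basis
    (nhds_basis_uniformity Metric.uniformity_basis_dist.compactConvergenceUniformity)).1
    (ContinuousMap.dense_setOfPred_contDiff h) (K, δ) ⟨hK, hδ⟩
  exact ⟨g, ContDiff.of_le (mem_ofPred_eq ▸ hg) (by exact_mod_cast le_top), fun x hx => hgK x hx⟩

/-- (a) Every Tverberg partition of the restriction of `F` to the `d`-skeleton is a
Tverberg partition of `F`. (b) Any continuous map on the `d`-skeleton can be slightly
distorted and extended to the full simplex so that every Tverberg partition of the
extension lies in the `d`-skeleton and is a Tverberg partition of the original map. -/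
theorem tverberg_full_vs_skeleton (d q : ℕ) (hd : 1 ≤ d) (hq : 1 ≤ q) :
    (∀ F : (Fin ((d+1)*(q-1)+1) → ℝ) → Euc d,
      ContinuousOn F (stdSimp ((d+1)*(q-1))) →
      ∀ P : Finset (Finset (Fin ((d+1)*(q-1)+1))),
        (IsTverbergPartition q F P ∧ ∀ S ∈ P, S.card ≤ d + 1) →
        IsTverbergPartition q F P) ∧
    (∀ f : (Fin ((d+1)*(q-1)+1) → ℝ) → Euc d,
      ContinuousOn f (skel ((d+1)*(q-1)) d) →
      ∀ ε > (0:ℝ),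
      ∃ F : (Fin ((d+1)*(q-1)+1) → ℝ) → Euc d,
        ContinuousOn F (stdSimp ((d+1)*(q-1))) ∧
        (∀ x ∈ skel ((d+1)*(q-1)) d, ‖F x - f x‖ < ε) ∧
        ∀ P : Finset (Finset (Fin ((d+1)*(q-1)+1))),
          IsTverbergPartition q F P →
          (∀ S ∈ P, S.card ≤ d + 1) ∧ IsTverbergPartition q f P) := by
  refine ⟨fun F _ P hP => hP.1, ?_⟩
  generalize hN : (d + 1) * (q - 1) = N
  intro f hf ε hε
  obtain ⟨h, hh⟩ := ContinuousMap.exists_restrict_eq (isClosed_skel N d)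
    ⟨(skel N d).domRestrict f, hf.domRestrict⟩
  have hhf : EqOn h f (skel N d) := fun x hx => DFunLike.congr_fun hh ⟨x, hx⟩
  obtain ⟨δ₀, hδ₀, hclose⟩ := exists_pos_isTverbergPartition_of_close hq h hhf
  have hδ : 0 < min ε δ₀ / 2 := by positivity
  obtain ⟨g, hg, hgh⟩ := exists_contDiff_approx_on_compact h (isCompact_stdSimp N) hδ
  obtain ⟨a, ha, hgen⟩ := exists_small_generic_perturbation hd hg hδ
  have hFh (x) (hx : x ∈ skel N d) : dist (g x + ∑ i, x i • a i) (h x) < min ε δ₀ := by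
    have hsum : ‖∑ i, x i • a i‖ ≤ ‖a‖ := by
      calc ‖∑ i, x i • a i‖ ≤ ∑ i, x i * ‖a‖ := norm_sum_le_of_le _ fun i _ => by
            rw [norm_smul, Real.norm_of_nonneg (hx.1.1 i)]
            exact mul_le_mul_of_nonneg_left (norm_le_pi_norm a i) (hx.1.1 i)
        _ = ‖a‖ := by rw [← Finset.sum_mul, hx.1.2, one_mul]
    have h1 := hgh x hx.1
    have h2 := norm_add_le (g x - h x) (∑ i, x i • a i)
    rw [dist_eq_norm] at h1 ⊢
    rw [add_sub_right_comm]
    linarith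
  refine ⟨fun x => g x + ∑ i, x i • a i, ?_, fun x hx => ?_, fun P hP => ?_⟩
  · have := hg.continuous
    fun_prop
  · rw [← hhf hx, ← dist_eq_norm]
    exact (hFh x hx).trans_le (min_le_left _ _)
  · have hsmall : ∀ S ∈ P, S.card ≤ d + 1 := by
      by_contra! hbig
      obtain ⟨T, hT, hTcard⟩ := hbig
      refine hP.2.2.2.ne_empty (subset_empty_iff.1 ?_)
      rw [← hgen (P.filter (·.card ≤ d + 1))
        (fun S hS T hT => hP.2.2.1 S (Finset.mem_of_mem_filter S hS) T
          (Finset.mem_of_mem_filter T hT))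
        (sum_card_filter_add_lt hq hN.symm hP.1 hP.2.2.1 hT hTcard)]
      exact biInter_subset_biInter_left fun S hS => Finset.mem_of_mem_filter S hS
    exact ⟨hsmall, hclose _ (fun x hx => (hFh x hx).trans_le (min_le_right _ _)) P hsmall hP⟩
end
end
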